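/- arXiv:math/9912202 — 2 statements merged into one kernel-verified Lean document; each statement's English description precedes it below -/
import Mathlib

section
/- Let n ≥ 2 and let K ⊂ ℝⁿ be a fixed compact set. For δ ∈ (0,1] and locally integrable f : ℝⁿ → ℝ, define the Nikodym maximal function M^δ f(x) = sup over all line segments γ of length 1 containing x of (1/vol(T^δ_γ)) ∫_{T^δ_γ} |f(y)| dy, where T^δ_γ = {y ∈ ℝⁿ : dist(y, γ) ≤ δ}. Then for every p with 1 < p ≤ (n+1)/2, q = (n−1)p/(p−1), and every ε > 0 there is a constant C (depending only on n, p, ε, K) such that for all δ ∈ (0,1] and all measurable f supported in K: ‖M^δ f‖_{L^q(K)} ≤ C·δ^{1−n/p−ε}·‖f‖_{L^p(ℝⁿ)}. -/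
open MeasureTheory ENNReal

/-- The line segment of length `L` starting at `p` in the unit direction `e`. -/
def nikSeg {n : ℕ} (p e : EuclideanSpace ℝ (Fin n)) :
    Set (EuclideanSpace ℝ (Fin n)) :=
  (fun s : ℝ => p + s • e) '' Set.Icc 0 1

/-- The `δ`-tube around the unit segment determined by `p` and `e`. -/
def nikTube {n : ℕ} (δ : ℝ) (p e : EuclideanSpace ℝ (Fin n)) :
    Set (EuclideanSpace ℝ (Fin n)) :=
  {y | Metric.infDist y (nikSeg p e) ≤ δ}

/-- The Nikodym maximal function: the supremum, over all unit line segments `γ`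
containing `x`, of the average of `|f|` over the `δ`-tube around `γ`. -/
noncomputable def nikMax {n : ℕ} (δ : ℝ) (f : EuclideanSpace ℝ (Fin n) → ℝ)
    (x : EuclideanSpace ℝ (Fin n)) : ℝ≥0∞ :=
  ⨆ (p : EuclideanSpace ℝ (Fin n)) (e : EuclideanSpace ℝ (Fin n)) (_ : ‖e‖ = 1)
    (_ : x ∈ nikSeg p e),
    (∫⁻ y in nikTube δ p e, ENNReal.ofReal |f y|) / volume (nikTube δ p e)

/-- volume of the unit ball -/
noncomputable def nikV (n : ℕ) : ℝ :=
  volume.real (Metric.ball (0 : EuclideanSpace ℝ (Fin n)) 1)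

lemma nikV_pos (n : ℕ) : 0 < nikV n := by
  unfold nikV
  rw [measureReal_def, ENNReal.toReal_pos_iff]
  exact ⟨Metric.measure_ball_pos _ _ one_pos, measure_ball_lt_top⟩

lemma nik_vol_ball {n : ℕ} (x : EuclideanSpace ℝ (Fin n)) {r : ℝ} (hr : 0 < r) :
    volume.real (Metric.ball x r) = r ^ n * nikV n := by
  unfold nikV
  have := Measure.addHaar_ball_of_pos (volume : Measure (EuclideanSpace ℝ (Fin n))) x hr
  rw [measureReal_def, this, measureReal_def, ENNReal.toReal_mul,
    ENNReal.toReal_ofReal (by positivity)]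
  simp

lemma nik_vol_cball {n : ℕ} (x : EuclideanSpace ℝ (Fin n)) {r : ℝ} (hr : 0 < r) :
    volume.real (Metric.closedBall x r) = r ^ n * nikV n := by
  unfold nikV
  have := Measure.addHaar_real_closedBall (volume : Measure (EuclideanSpace ℝ (Fin n))) x hr.le
  simpa using this

lemma nik_cyl {n : ℕ} (hn : 1 ≤ n) (p e a : EuclideanSpace ℝ (Fin n)) (he : ‖e‖ = 1)
    {r ρ : ℝ} (hr : 0 < r) (hρ : 0 < ρ) :
    volume.real ({y | ∃ s : ℝ, dist y (p + s • e) ≤ ρ} ∩ Metric.closedBall a r) ≤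
      9 * 2 ^ n * nikV n * r * ρ ^ (n - 1) := by
  have hv := nikV_pos n
  obtain ⟨m, rfl⟩ : ∃ m, n = m + 1 := ⟨n - 1, by omega⟩
  simp only [Nat.add_sub_cancel]
  rcases lt_or_ge r ρ with h | h
  · calc _ ≤ volume.real (Metric.closedBall a r) :=
          measureReal_mono Set.inter_subset_right measure_closedBall_lt_top.ne
      _ = r ^ m * (r * nikV (m+1)) := by rw [nik_vol_cball _ hr]; ring
      _ ≤ ρ ^ m * (r * nikV (m+1)) := by gcongr
      _ = 1 * 1 * nikV (m+1) * r * ρ ^ m := by ring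
      _ ≤ _ := by
        gcongr
        · norm_num
        · exact one_le_pow₀ (by norm_num)
  · by_cases hne : ({y | ∃ s : ℝ, dist y (p + s • e) ≤ ρ} ∩ Metric.closedBall a r).Nonempty
    swap
    · rw [Set.not_nonempty_iff_eq_empty] at hne
      rw [hne]; simp; positivity
    obtain ⟨y0, ⟨s0, hs0⟩, hy0⟩ := hne
    set N := ⌊8 * r / ρ⌋₊ + 1 with hN
    have hsub : ({y | ∃ s : ℝ, dist y (p + s • e) ≤ ρ} ∩ Metric.closedBall a r) ⊆
        ⋃ k ∈ Finset.range N, Metric.closedBall (p + (s0 - 4 * r + k * ρ) • e) (2 * ρ) := by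
      rintro y ⟨⟨s, hs⟩, hy⟩
      have h1 : |s - s0| ≤ 4 * r := by
        have : dist (p + s • e) (p + s0 • e) = |s - s0| := by
          rw [dist_add_left, dist_eq_norm, ← sub_smul, norm_smul, he]; simp
        rw [← this]
        have t1 := dist_triangle4 (p + s • e) y y0 (p + s0 • e)
        have t2 := dist_triangle_right y y0 a
        rw [Metric.mem_closedBall] at hy hy0
        rw [dist_comm y] at hs
        linarith
      rw [abs_le] at h1
      set u := (s - (s0 - 4 * r)) / ρ with hu
      have hu0 : 0 ≤ u := div_nonneg (by linarith) hρ.le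
      have hus : s = s0 - 4 * r + u * ρ := by rw [hu]; field_simp; ring
      have hu1 : u ≤ 8 * r / ρ := by rw [hu]; gcongr; linarith
      simp only [Set.mem_iUnion, Finset.mem_range]
      refine ⟨⌊u⌋₊, ?_, ?_⟩
      · rw [hN, Nat.lt_succ_iff]; exact Nat.floor_le_floor hu1
      · rw [Metric.mem_closedBall]
        have : dist (p + s • e) (p + (s0 - 4 * r + ⌊u⌋₊ * ρ) • e) ≤ ρ := by
          rw [dist_add_left, dist_eq_norm, ← sub_smul, norm_smul, he, mul_one, Real.norm_eq_abs,
            abs_le]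
          have f1 := Nat.floor_le hu0
          have f2 := (Nat.lt_floor_add_one u).le
          rw [hus]
          constructor <;> nlinarith
        have := dist_triangle y (p + s • e) (p + (s0 - 4 * r + ⌊u⌋₊ * ρ) • e)
        linarith
    have hNr : (N : ℝ) ≤ 9 * r / ρ := by
      rw [hN]; push_cast
      have := Nat.floor_le (show 0 ≤ 8 * r / ρ by positivity)
      have h2 : 1 ≤ r / ρ := by rw [le_div_iff₀ hρ]; linarith
      have : 9 * r / ρ = 8 * r / ρ + r / ρ := by ring
      linarith
    calc _ ≤ volume.real (⋃ k ∈ Finset.range N,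
            Metric.closedBall (p + (s0 - 4 * r + k * ρ) • e) (2 * ρ)) :=
          measureReal_mono hsub (by
            refine (measure_biUnion_lt_top (Finset.finite_toSet _) ?_).ne
            intro i _; exact measure_closedBall_lt_top)
      _ ≤ ∑ k ∈ Finset.range N, volume.real
            (Metric.closedBall (p + (s0 - 4 * r + k * ρ) • e) (2 * ρ)) :=
          measureReal_biUnion_finset_le _ _
      _ = N * ((2 * ρ) ^ (m+1) * nikV (m+1)) := by
          simp [nik_vol_cball _ (show 0 < 2 * ρ by positivity)]
      _ ≤ 9 * r / ρ * ((2 * ρ) ^ (m+1) * nikV (m+1)) := by gcongr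
      _ = _ := by field_simp; ring

lemma nikTube_mem {n : ℕ} {δ : ℝ} {p e y : EuclideanSpace ℝ (Fin n)} :
    y ∈ nikTube δ p e ↔ ∃ s ∈ Set.Icc (0:ℝ) 1, dist y (p + s • e) ≤ δ := by
  have hc : IsCompact (nikSeg p e) := by
    unfold nikSeg
    exact isCompact_Icc.image (by fun_prop)
  have hne : (nikSeg p e).Nonempty := ⟨p + (0:ℝ) • e, 0, by simp, rfl⟩
  constructor
  · intro h
    obtain ⟨z, ⟨s, hs, rfl⟩, hz⟩ := hc.exists_infDist_eq_dist hne y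
    refine ⟨s, hs, ?_⟩
    have : Metric.infDist y (nikSeg p e) ≤ δ := h
    rw [hz] at this; exact this
  · rintro ⟨s, hs, h⟩
    exact (Metric.infDist_le_dist_of_mem (x := y) (show p + s • e ∈ nikSeg p e from ⟨s, hs, rfl⟩)).trans h

lemma nikTube_closed {n : ℕ} (δ : ℝ) (p e : EuclideanSpace ℝ (Fin n)) :
    IsClosed (nikTube δ p e) :=
  isClosed_le (Metric.continuous_infDist_pt _) continuous_const

lemma nikTube_fin {n : ℕ} (δ : ℝ) (p e : EuclideanSpace ℝ (Fin n)) (he : ‖e‖ = 1) :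
    volume (nikTube δ p e) < ⊤ := by
  refine lt_of_le_of_lt (measure_mono (t := Metric.closedBall p (δ + 1)) ?_)
    measure_closedBall_lt_top
  intro y hy
  obtain ⟨s, hs, h⟩ := nikTube_mem.1 hy
  rw [Metric.mem_closedBall]
  have h1 : dist (p + s • e) p ≤ 1 := by
    simp [norm_smul, he, abs_of_nonneg hs.1, hs.2]
  linarith [dist_triangle y (p + s • e) p]

lemma nikTube_vol {n : ℕ} (hn : 1 ≤ n) {δ : ℝ} (hδ : 0 < δ)
    (p e : EuclideanSpace ℝ (Fin n)) (he : ‖e‖ = 1) :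
    nikV n / 2 * δ ^ (n - 1) ≤ volume.real (nikTube δ p e) := by
  have hv := nikV_pos n
  obtain ⟨m, rfl⟩ : ∃ m, n = m + 1 := ⟨n - 1, by omega⟩
  simp only [Nat.add_sub_cancel]
  set N := ⌊1 / (2 * δ)⌋₊ + 1 with hN
  have hNr : 1 / (2 * δ) ≤ N := by
    rw [hN]; push_cast; exact (Nat.lt_floor_add_one _).le
  have hsub : (⋃ k ∈ Finset.range N, Metric.ball (p + (2 * δ * (k:ℝ)) • e) δ) ⊆
      nikTube δ p e := by
    intro y hy
    simp only [Set.mem_iUnion, Finset.mem_range] at hy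
    obtain ⟨k, hk, hy⟩ := hy
    refine nikTube_mem.2 ⟨2 * δ * k, ⟨by positivity, ?_⟩, (Metric.mem_ball.1 hy).le⟩
    have h1 : (k : ℝ) ≤ 1 / (2 * δ) := by
      rw [hN, Nat.lt_succ_iff] at hk
      exact (Nat.cast_le.2 hk).trans (Nat.floor_le (by positivity))
    rw [le_div_iff₀ (by positivity)] at h1
    linarith
  calc nikV (m+1) / 2 * δ ^ m = 1 / (2 * δ) * (δ ^ (m+1) * nikV (m+1)) := by
        rw [pow_succ]; field_simp
    _ ≤ N * (δ ^ (m+1) * nikV (m+1)) := by gcongr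
    _ = ∑ k ∈ Finset.range N, volume.real (Metric.ball (p + (2 * δ * (k:ℝ)) • e) δ) := by
        simp [nik_vol_ball _ hδ]
    _ = volume.real (⋃ k ∈ Finset.range N, Metric.ball (p + (2 * δ * (k:ℝ)) • e) δ) := by
        rw [measureReal_biUnion_finset]
        · intro i _ j _ hij
          apply Metric.ball_disjoint_ball
          rw [dist_add_left, dist_eq_norm, ← sub_smul, norm_smul, he, mul_one, ← mul_sub,
            norm_mul, Real.norm_eq_abs, Real.norm_eq_abs, abs_of_pos (by positivity : 0 < 2 * δ)]
          have : (1 : ℝ) ≤ |(i:ℝ) - j| := by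
            have : (1:ℤ) ≤ |(i:ℤ) - j| := Int.one_le_abs (by
              intro h; apply hij; omega)
            exact_mod_cast this
          nlinarith
        · intro i _; exact measurableSet_ball
    _ ≤ _ := measureReal_mono hsub (nikTube_fin _ _ _ he).ne

lemma nik_geom {n : ℕ} {δ r : ℝ} (hδ : 0 < δ) (hδ1 : δ ≤ 1) (hr : 0 < r) (hr1 : r ≤ 1)
    {p e p' e' y a b : EuclideanSpace ℝ (Fin n)} (he : ‖e‖ = 1)
    (hy : y ∈ nikSeg p e) (ha : a ∈ nikTube δ p e) (hb : b ∈ nikTube δ p e)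
    (ha' : a ∈ nikTube δ p' e') (hb' : b ∈ nikTube δ p' e') (hab : r ≤ dist a b) :
    ∃ s : ℝ, dist y (p' + s • e') ≤ 12 * δ / r := by
  obtain ⟨sa, hsa, ha⟩ := nikTube_mem.1 ha
  obtain ⟨sb, hsb, hb⟩ := nikTube_mem.1 hb
  obtain ⟨ta, hta, ha'⟩ := nikTube_mem.1 ha'
  obtain ⟨tb, htb, hb'⟩ := nikTube_mem.1 hb'
  obtain ⟨s, hs, rfl⟩ := hy
  have key : ∀ u v : ℝ, dist (p + u • e) (p + v • e) = |u - v| := by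
    intro u v
    rw [dist_add_left, dist_eq_norm, ← sub_smul, norm_smul, he]; simp
  have haa : dist (p + sa • e) (p' + ta • e') ≤ 2 * δ := by
    have := dist_triangle_left (p + sa • e) (p' + ta • e') a
    linarith
  have hbb : dist (p + sb • e) (p' + tb • e') ≤ 2 * δ := by
    have := dist_triangle_left (p + sb • e) (p' + tb • e') b
    linarith
  rcases lt_or_ge r (4 * δ) with h | h
  · refine ⟨ta, ?_⟩
    have h1 : dist (p + s • e) (p + sa • e) ≤ 1 := by
      rw [key, abs_le]; constructor <;> linarith [hs.1, hs.2, hsa.1, hsa.2]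
    have := dist_triangle (p + s • e) (p + sa • e) (p' + ta • e')
    rw [le_div_iff₀ hr]
    have : dist (p + s • e) (p' + ta • e') ≤ 3 := by linarith
    nlinarith
  · have hd : r / 2 ≤ |sb - sa| := by
      rw [← key]
      have := dist_triangle4_left (p + sb • e) (p + sa • e) b a
      have := dist_triangle4 a (p + sa • e) (p + sb • e) b
      rw [dist_comm b] at hb
      rw [dist_comm (p + sa • e)] at this
      linarith
    have hne : sb - sa ≠ 0 := by
      intro h0; rw [h0] at hd; simp at hd; linarith
    set τ := (s - sa) / (sb - sa) with hτ
    have hτs : s = sa + τ * (sb - sa) := by rw [hτ]; field_simp; ring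
    have hτ1 : |τ| ≤ 2 / r := by
      rw [hτ, abs_div, div_le_div_iff₀ (by positivity) hr]
      have : |s - sa| ≤ 1 := by
        rw [abs_le]; constructor <;> linarith [hs.1, hs.2, hsa.1, hsa.2]
      nlinarith [abs_nonneg (s - sa)]
    refine ⟨ta + τ * (tb - ta), ?_⟩
    have e1 : (p + s • e) - (p' + (ta + τ * (tb - ta)) • e') =
        (1 - τ) • ((p + sa • e) - (p' + ta • e')) + τ • ((p + sb • e) - (p' + tb • e')) := by
      rw [hτs]; module
    rw [dist_eq_norm] at *
    show ‖(p + s • e) - (p' + (ta + τ * (tb - ta)) • e')‖ ≤ _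
    rw [e1]
    refine (norm_add_le _ _).trans ?_
    rw [norm_smul, norm_smul, Real.norm_eq_abs, Real.norm_eq_abs]
    have h1 : |1 - τ| ≤ 1 + 2 / r := by
      refine (abs_sub _ _).trans ?_
      simpa using hτ1
    have h2 : 1 ≤ 1 / r := by rw [le_div_iff₀ hr]; linarith
    calc _ ≤ (1 + 2 / r) * (2 * δ) + 2 / r * (2 * δ) := by gcongr
      _ ≤ (1 / r + 2 / r) * (2 * δ) + 2 / r * (2 * δ) := by gcongr
      _ ≤ _ := by
        have : 0 < δ / r := by positivity
        have e2 : (1 / r + 2 / r) * (2 * δ) + 2 / r * (2 * δ) = 10 * (δ / r) := by ring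
        rw [e2, mul_div_assoc]; nlinarith

lemma nik_count {n : ℕ} (hn : 1 ≤ n) {δ R : ℝ} (hδ : 0 < δ) (hδ1 : δ ≤ 1) (hR : δ ≤ R)
    (p e a : EuclideanSpace ℝ (Fin n)) (he : ‖e‖ = 1) (Y : Finset (EuclideanSpace ℝ (Fin n)))
    (hsep : ∀ x ∈ Y, ∀ y ∈ Y, x ≠ y → δ ≤ dist x y)
    (hY : ∀ y ∈ Y, dist y a ≤ 2 ∧ ∃ s : ℝ, dist y (p + s • e) ≤ R) :
    Y.card * (δ / 2) ^ n ≤ 27 * 2 ^ n * (2 * R) ^ (n - 1) := by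
  have hv := nikV_pos n
  have hsub : (⋃ y ∈ Y, Metric.ball y (δ / 2)) ⊆
      {y | ∃ s : ℝ, dist y (p + s • e) ≤ 2 * R} ∩ Metric.closedBall a 3 := by
    intro x hx
    simp only [Set.mem_iUnion] at hx
    obtain ⟨y, hy, hx⟩ := hx
    obtain ⟨h1, s, hs⟩ := hY y hy
    rw [Metric.mem_ball] at hx
    refine ⟨⟨s, ?_⟩, ?_⟩
    · linarith [dist_triangle x y (p + s • e)]
    · rw [Metric.mem_closedBall]
      linarith [dist_triangle x y a]
  have h1 : Y.card * ((δ / 2) ^ n * nikV n) ≤ 9 * 2 ^ n * nikV n * 3 * (2 * R) ^ (n - 1) := by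
    calc Y.card * ((δ / 2) ^ n * nikV n) = ∑ y ∈ Y, volume.real (Metric.ball y (δ / 2)) := by
          simp [nik_vol_ball _ (half_pos hδ)]
      _ = volume.real (⋃ y ∈ Y, Metric.ball y (δ / 2)) := by
          rw [measureReal_biUnion_finset]
          · intro i hi j hj hij
            apply Metric.ball_disjoint_ball
            have := hsep i hi j hj hij
            linarith
          · intro i _; exact measurableSet_ball
      _ ≤ volume.real ({y | ∃ s : ℝ, dist y (p + s • e) ≤ 2 * R} ∩ Metric.closedBall a 3) :=
          measureReal_mono hsub
            ((measure_mono Set.inter_subset_right).trans_lt measure_closedBall_lt_top).ne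
      _ ≤ _ := nik_cyl hn p e a he (by norm_num) (by linarith)
  have : (Y.card * (δ / 2) ^ n) * nikV n ≤ (27 * 2 ^ n * (2 * R) ^ (n - 1)) * nikV n := by
    linarith
  exact le_of_mul_le_mul_right this hv

lemma nik_maxcount {n : ℕ} (E : Set (EuclideanSpace ℝ (Fin n)))
    (hEf : volume E ≠ ⊤) (hEne : E.Nonempty) (X : Finset (EuclideanSpace ℝ (Fin n)))
    (T : EuclideanSpace ℝ (Fin n) → Set (EuclideanSpace ℝ (Fin n)))
    (hT : ∀ x, MeasurableSet (T x)) :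
    ∃ a ∈ E, ∃ Y ⊆ X, (∀ y ∈ Y, a ∈ T y) ∧
      ∑ x ∈ X, volume.real (E ∩ T x) ≤ Y.card * volume.real E := by
  classical
  let c : EuclideanSpace ℝ (Fin n) → ℕ := fun y => (X.filter (fun x => y ∈ T x)).card
  have hbd : BddAbove (c '' E) := by
    refine ⟨X.card, ?_⟩
    rintro _ ⟨y, _, rfl⟩
    exact Finset.card_filter_le _ _
  obtain ⟨a, haE, ha⟩ := Nat.sSup_mem (hEne.image c) hbd
  refine ⟨a, haE, X.filter (fun x => a ∈ T x), Finset.filter_subset _ _, ?_, ?_⟩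
  · intro y hy; exact (Finset.mem_filter.1 hy).2
  have hmax : ∀ y ∈ E, c y ≤ c a := by
    intro y hy; rw [ha]; exact le_csSup hbd ⟨y, hy, rfl⟩
  have h1 : ∑ x ∈ X, volume (E ∩ T x) ≤ (c a : ℝ≥0∞) * volume E := by
    calc ∑ x ∈ X, volume (E ∩ T x) = ∑ x ∈ X, ∫⁻ y in E, (T x).indicator 1 y := by
          refine Finset.sum_congr rfl fun x _ => ?_
          rw [lintegral_indicator_one (hT x), Measure.restrict_apply (hT x), Set.inter_comm]
      _ = ∫⁻ y in E, ∑ x ∈ X, (T x).indicator 1 y := by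
          rw [lintegral_finsetSum]
          intro x _; exact measurable_one.indicator (hT x)
      _ ≤ ∫⁻ y in E, (c a : ℝ≥0∞) := by
          refine setLIntegral_mono measurable_const fun y hy => ?_
          have : ∑ x ∈ X, (T x).indicator (1 : EuclideanSpace ℝ (Fin n) → ℝ≥0∞) y = c y := by
            simp [c, Set.indicator_apply, Finset.sum_boole]
          rw [this]; exact_mod_cast hmax y hy
      _ = _ := by simp
  have h2 := ENNReal.toReal_mono (ENNReal.mul_ne_top (ENNReal.natCast_ne_top _) hEf) h1
  rw [ENNReal.toReal_sum, ENNReal.toReal_mul, ENNReal.toReal_natCast] at h2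
  · exact h2
  · intro x _
    exact ((measure_mono Set.inter_subset_left).trans_lt hEf.lt_top).ne

lemma nik_select {n : ℕ} (Y : Finset (EuclideanSpace ℝ (Fin n)))
    (S : EuclideanSpace ℝ (Fin n) → Set (EuclideanSpace ℝ (Fin n))) :
    ∃ Z ⊆ Y, (∀ x ∈ Z, ∀ y ∈ Z, x ≠ y → Disjoint (S x) (S y)) ∧
      ∀ y ∈ Y, ∃ z ∈ Z, y = z ∨ ¬ Disjoint (S y) (S z) := by
  classical
  have hne : (Y.powerset.filter (fun Z => ∀ x ∈ Z, ∀ y ∈ Z, x ≠ y → Disjoint (S x) (S y))).Nonempty :=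
    ⟨∅, by simp⟩
  obtain ⟨Z, hZ, hmax⟩ := Finset.exists_max_image _ Finset.card hne
  simp only [Finset.mem_filter, Finset.mem_powerset] at hZ hmax
  refine ⟨Z, hZ.1, hZ.2, ?_⟩
  intro y hy
  by_contra! hcon
  have hyZ : y ∉ Z := fun h => (hcon y h).1 rfl
  have := hmax (insert y Z) ⟨Finset.insert_subset hy hZ.1, ?_⟩
  · rw [Finset.card_insert_of_notMem hyZ] at this; omega
  · intro u hu w hw huw
    rw [Finset.mem_insert] at hu hw
    rcases hu with rfl | hu <;> rcases hw with rfl | hw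
    · exact absurd rfl huw
    · exact (hcon w hw).2
    · exact (hcon u hu).2.symm
    · exact hZ.2 u hu w hw huw

lemma nik_bush (m : ℕ) : ∃ C : ℝ, 0 < C ∧ ∀ δ : ℝ, 0 < δ → δ ≤ 1 → ∀ l : ℝ, 0 < l →
    ∀ E : Set (EuclideanSpace ℝ (Fin (m+1))), MeasurableSet E → volume E ≠ ⊤ →
    ∀ X : Finset (EuclideanSpace ℝ (Fin (m+1))),
    (∀ x ∈ X, ∀ y ∈ X, x ≠ y → δ ≤ dist x y) →
    ∀ P D : EuclideanSpace ℝ (Fin (m+1)) → EuclideanSpace ℝ (Fin (m+1)),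
    (∀ x ∈ X, ‖D x‖ = 1 ∧ x ∈ nikSeg (P x) (D x) ∧
      l * volume.real (nikTube δ (P x) (D x)) ≤ volume.real (E ∩ nikTube δ (P x) (D x))) →
    X.card * (l ^ (m + 2) * δ ^ (2 * m + 1)) ≤ C * volume.real E ^ 2 := by
  classical
  have hv := nikV_pos (m+1)
  set v := nikV (m+1) with hvdef
  set c0 : ℝ := 1 / (36 * 2 ^ (m+1)) with hc0
  have hc0p : 0 < c0 := by positivity
  have hc01 : c0 ≤ 1 := by
    rw [hc0, div_le_one (by positivity)]
    have : (1:ℝ) ≤ 2 ^ (m+1) := one_le_pow₀ (by norm_num)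
    linarith
  set B : ℝ := 27 * 4 ^ (m+1) * 24 ^ m with hB
  refine ⟨8 * B / (c0 ^ m * v ^ 2), by positivity, ?_⟩
  intro δ hδ hδ1 l hl E hEm hEf X hsep P D hX
  rcases X.eq_empty_or_nonempty with rfl | ⟨x0, hx0⟩
  · simp; positivity
  have hfin : ∀ S : Set (EuclideanSpace ℝ (Fin (m+1))), volume (E ∩ S) ≠ ⊤ := fun S =>
    ((measure_mono Set.inter_subset_left).trans_lt hEf.lt_top).ne
  have hTv : ∀ x ∈ X, v / 2 * δ ^ m ≤ volume.real (nikTube δ (P x) (D x)) := fun x hx =>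
    nikTube_vol (by omega) hδ _ _ (hX x hx).1
  have hl1 : l ≤ 1 := by
    have h1 := (hX x0 hx0).2.2
    have h2 : volume.real (E ∩ nikTube δ (P x0) (D x0)) ≤ volume.real (nikTube δ (P x0) (D x0)) :=
      measureReal_mono Set.inter_subset_right (nikTube_fin _ _ _ (hX x0 hx0).1).ne
    have h3 := hTv x0 hx0
    have h4 : 0 < v / 2 * δ ^ m := by positivity
    by_contra! hc
    nlinarith
  have hEne : E.Nonempty := by
    by_contra hc
    rw [Set.not_nonempty_iff_eq_empty] at hc
    have h1 := (hX x0 hx0).2.2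
    have h3 := hTv x0 hx0
    have h4 : 0 < v / 2 * δ ^ m := by positivity
    rw [hc] at h1
    simp at h1
    nlinarith
  obtain ⟨a, haE, Y, hYX, hYa, hsum⟩ := nik_maxcount E hEf hEne X
    (fun x => nikTube δ (P x) (D x)) (fun x => (nikTube_closed _ _ _).measurableSet)
  have hI1 : X.card * (l * (v / 2 * δ ^ m)) ≤ Y.card * volume.real E := by
    refine le_trans ?_ hsum
    rw [← nsmul_eq_mul]
    refine Finset.card_nsmul_le_sum _ _ _ fun x hx => ?_
    exact (mul_le_mul_of_nonneg_left (hTv x hx) hl.le).trans (hX x hx).2.2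
  set r := c0 * l with hr
  have hrp : 0 < r := by positivity
  have hr1 : r ≤ 1 := by nlinarith
  obtain ⟨Z, hZY, hZd, hZm⟩ := nik_select Y (fun x => nikTube δ (P x) (D x) \ Metric.closedBall a r)
  -- each point of Y lies in a fat tube
  have hYZ : Y ⊆ Z.biUnion (fun z => Y.filter (fun y => ∃ s : ℝ, dist y (P z + s • D z) ≤ 12 * δ / r)) := by
    intro y hy
    obtain ⟨z, hz, h⟩ := hZm y hy
    rw [Finset.mem_biUnion]
    refine ⟨z, hz, Finset.mem_filter.2 ⟨hy, ?_⟩⟩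
    rcases h with rfl | h
    · obtain ⟨s, hs, h⟩ := (hX y (hYX hy)).2.1
      refine ⟨s, ?_⟩
      have h' : P y + s • D y = y := h
      rw [h', dist_self]; positivity
    · rw [Set.not_disjoint_iff] at h
      obtain ⟨b, ⟨hb1, hb2⟩, hb3, _⟩ := h
      rw [Metric.mem_closedBall, not_le, dist_comm] at hb2
      exact nik_geom hδ hδ1 hrp hr1 (hX y (hYX hy)).1 (hX y (hYX hy)).2.1 (hYa y hy) hb1
        (hYa z (hZY hz)) hb3 hb2.le
  have hRδ : δ ≤ 12 * δ / r := by
    rw [le_div_iff₀ hrp]; nlinarith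
  have hI2 : Y.card * (δ * r ^ m) ≤ Z.card * B := by
    have hc : ∀ z ∈ Z, ((Y.filter (fun y => ∃ s : ℝ, dist y (P z + s • D z) ≤ 12 * δ / r)).card : ℝ)
        * (δ / 2) ^ (m+1) ≤ 27 * 2 ^ (m+1) * (2 * (12 * δ / r)) ^ m := by
      intro z hz
      refine nik_count (n := m+1) (by omega) hδ hδ1 hRδ (P z) (D z) a (hX z (hYX (hZY hz))).1 _ ?_ ?_
      · intro x hx y hy
        exact hsep x (hYX (Finset.mem_filter.1 hx).1) y (hYX (Finset.mem_filter.1 hy).1)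
      · intro y hy
        obtain ⟨hy, hs⟩ := Finset.mem_filter.1 hy
        refine ⟨?_, hs⟩
        obtain ⟨s, hs, h⟩ := (hX y (hYX hy)).2.1
        obtain ⟨t, ht, h'⟩ := nikTube_mem.1 (hYa y hy)
        have h1 : P y + s • D y = y := h
        have h2 : dist y (P y + t • D y) ≤ 1 := by
          nth_rw 1 [← h1]
          rw [dist_add_left, dist_eq_norm, ← sub_smul, norm_smul, (hX y (hYX hy)).1, mul_one,
            Real.norm_eq_abs, abs_le]
          constructor <;> linarith [hs.1, hs.2, ht.1, ht.2]
        linarith [dist_triangle_right y a (P y + t • D y)]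
    have h1 : (Y.card : ℝ) ≤ ∑ z ∈ Z,
        ((Y.filter (fun y => ∃ s : ℝ, dist y (P z + s • D z) ≤ 12 * δ / r)).card : ℝ) := by
      exact_mod_cast (Finset.card_le_card hYZ).trans Finset.card_biUnion_le
    have h2 : (Y.card : ℝ) * (δ / 2) ^ (m+1) ≤
        Z.card * (27 * 2 ^ (m+1) * (2 * (12 * δ / r)) ^ m) := by
      calc _ ≤ (∑ z ∈ Z,
        ((Y.filter (fun y => ∃ s : ℝ, dist y (P z + s • D z) ≤ 12 * δ / r)).card : ℝ))
          * (δ / 2) ^ (m+1) := by gcongr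
        _ ≤ _ := by
          rw [Finset.sum_mul, ← nsmul_eq_mul]
          exact Finset.sum_le_card_nsmul _ _ _ hc
    have h3 : (Y.card : ℝ) * (δ * r ^ m) =
        ((Y.card : ℝ) * (δ / 2) ^ (m+1)) * (2 ^ (m+1) * r ^ m / δ ^ m) := by
      rw [div_pow, pow_succ δ]; field_simp
    have h4 : Z.card * B = Z.card * (27 * 2 ^ (m+1) * (2 * (12 * δ / r)) ^ m) *
        (2 ^ (m+1) * r ^ m / δ ^ m) := by
      have e4 : (4:ℝ) ^ (m+1) = 2 ^ (m+1) * 2 ^ (m+1) := by rw [← mul_pow]; norm_num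
      have e5 : (2 * (12 * δ / r)) ^ m = 24 ^ m * δ ^ m / r ^ m := by
        rw [← mul_pow, ← div_pow]; congr 1; ring
      rw [hB, e4, e5]; field_simp
    rw [h3, h4]
    gcongr
  have hI3 : Z.card * (l * v / 4 * δ ^ m) ≤ volume.real E := by
    have h1 : ∀ z ∈ Z, l * v / 4 * δ ^ m ≤
        volume.real (E ∩ (nikTube δ (P z) (D z) \ Metric.closedBall a r)) := by
      intro z hz
      have hzX := hYX (hZY hz)
      have a1 := (hX z hzX).2.2
      have a2 := hTv z hzX
      have a3 : volume.real (nikTube δ (P z) (D z) ∩ Metric.closedBall a r) ≤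
          9 * 2 ^ (m+1) * v * r * δ ^ m := by
        refine le_trans (measureReal_mono ?_ ?_) (nik_cyl (n := m+1) (by omega) (P z) (D z) a (hX z hzX).1 hrp hδ)
        · intro y hy
          obtain ⟨s, _, hs⟩ := nikTube_mem.1 hy.1
          exact ⟨⟨s, hs⟩, hy.2⟩
        · exact ((measure_mono Set.inter_subset_right).trans_lt measure_closedBall_lt_top).ne
      have a4 : 9 * 2 ^ (m+1) * v * r * δ ^ m = l * v / 4 * δ ^ m := by
        rw [hr, hc0]; field_simp; norm_num
      have a5 : volume.real (E ∩ nikTube δ (P z) (D z)) ≤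
          volume.real (E ∩ (nikTube δ (P z) (D z) \ Metric.closedBall a r)) +
          volume.real (nikTube δ (P z) (D z) ∩ Metric.closedBall a r) := by
        refine le_trans (measureReal_mono ?_ ?_) (measureReal_union_le _ _)
        · intro y hy
          by_cases hb : y ∈ Metric.closedBall a r
          · exact Or.inr ⟨hy.2, hb⟩
          · exact Or.inl ⟨hy.1, hy.2, hb⟩
        · refine (measure_union_lt_top (hfin _).lt_top ?_).ne
          exact (measure_mono Set.inter_subset_right).trans_lt measure_closedBall_lt_top
      have a6 : l * (v / 2 * δ ^ m) ≤ l * volume.real (nikTube δ (P z) (D z)) := by gcongr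
      have a7 : l * (v / 2 * δ ^ m) = l * v / 4 * δ ^ m + l * v / 4 * δ ^ m := by ring
      linarith
    calc _ ≤ ∑ z ∈ Z, volume.real (E ∩ (nikTube δ (P z) (D z) \ Metric.closedBall a r)) := by
          rw [← nsmul_eq_mul]; exact Finset.card_nsmul_le_sum _ _ _ h1
      _ = volume.real (⋃ z ∈ Z, (E ∩ (nikTube δ (P z) (D z) \ Metric.closedBall a r))) := by
          rw [measureReal_biUnion_finset]
          · intro i hi j hj hij
            exact (hZd i hi j hj hij).mono Set.inter_subset_right Set.inter_subset_right
          · intro i _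
            exact hEm.inter ((nikTube_closed _ _ _).measurableSet.diff measurableSet_closedBall)
      _ ≤ _ := measureReal_mono (Set.iUnion₂_subset fun _ _ => Set.inter_subset_left) hEf
  have hEr : 0 ≤ volume.real E := measureReal_nonneg
  rw [div_mul_eq_mul_div, le_div_iff₀ (by positivity)]
  have f1 : X.card * (l * (v / 2 * δ ^ m)) * (δ * r ^ m * (l * v / 4 * δ ^ m)) ≤
      B * volume.real E ^ 2 := by
    calc _ ≤ Y.card * volume.real E * (δ * r ^ m * (l * v / 4 * δ ^ m)) := by gcongr
      _ = Y.card * (δ * r ^ m) * (volume.real E * (l * v / 4 * δ ^ m)) := by ring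
      _ ≤ Z.card * B * (volume.real E * (l * v / 4 * δ ^ m)) := by gcongr
      _ = Z.card * (l * v / 4 * δ ^ m) * (B * volume.real E) := by ring
      _ ≤ volume.real E * (B * volume.real E) := by gcongr
      _ = _ := by ring
  have f2 : X.card * (l * (v / 2 * δ ^ m)) * (δ * r ^ m * (l * v / 4 * δ ^ m)) =
      X.card * (l ^ (m + 2) * δ ^ (2 * m + 1)) * (c0 ^ m * v ^ 2) / 8 := by
    rw [hr, mul_pow]; ring
  rw [f2] at f1
  linarith

lemma nik_pack {n : ℕ} {δ N : ℝ} (hδ : 0 < δ) (F : Set (EuclideanSpace ℝ (Fin n)))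
    (h : ∀ X : Finset (EuclideanSpace ℝ (Fin n)), ↑X ⊆ F →
      (∀ x ∈ X, ∀ y ∈ X, x ≠ y → δ ≤ dist x y) → (X.card : ℝ) ≤ N) :
    volume F ≤ ENNReal.ofReal (N * (δ ^ n * nikV n)) := by
  classical
  let S : Set ℕ := {k | ∃ X : Finset (EuclideanSpace ℝ (Fin n)), ↑X ⊆ F ∧
      (∀ x ∈ X, ∀ y ∈ X, x ≠ y → δ ≤ dist x y) ∧ X.card = k}
  have hbd : BddAbove S := by
    refine ⟨⌊N⌋₊, ?_⟩
    rintro k ⟨X, h1, h2, rfl⟩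
    exact Nat.le_floor (h X h1 h2)
  have hne : S.Nonempty := ⟨0, ∅, by simp⟩
  obtain ⟨X, h1, h2, h3⟩ := Nat.sSup_mem hne hbd
  have hv := nikV_pos n
  have hcov : F ⊆ ⋃ x ∈ X, Metric.ball x δ := by
    intro y hy
    by_contra hc
    simp only [Set.mem_iUnion, Metric.mem_ball, not_exists, not_lt] at hc
    have hyX : y ∉ X := fun hX => by
      have := hc y hX; rw [dist_self] at this; linarith
    have : X.card + 1 ≤ sSup S := by
      refine le_csSup hbd ⟨insert y X, ?_, ?_, Finset.card_insert_of_notMem hyX⟩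
      · intro z hz
        simp only [Finset.coe_insert, Set.mem_insert_iff, Finset.mem_coe] at hz
        rcases hz with rfl | hz
        · exact hy
        · exact h1 hz
      · intro u hu w hw huw
        rw [Finset.mem_insert] at hu hw
        rcases hu with rfl | hu <;> rcases hw with rfl | hw
        · exact absurd rfl huw
        · exact hc w hw
        · rw [dist_comm]; exact hc u hu
        · exact h2 u hu w hw huw
    omega
  calc volume F ≤ volume (⋃ x ∈ X, Metric.ball x δ) := measure_mono hcov
    _ ≤ ∑ x ∈ X, volume (Metric.ball x δ) := measure_biUnion_finset_le _ _
    _ = ∑ x ∈ X, ENNReal.ofReal (δ ^ n * nikV n) := by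
        refine Finset.sum_congr rfl fun x _ => ?_
        rw [← nik_vol_ball x hδ, ofReal_measureReal measure_ball_lt_top.ne]
    _ = ENNReal.ofReal (X.card * (δ ^ n * nikV n)) := by
        rw [Finset.sum_const, nsmul_eq_mul, ENNReal.ofReal_mul (p := (X.card : ℝ)) (by positivity),
          ENNReal.ofReal_natCast]
    _ ≤ _ := by
        apply ENNReal.ofReal_le_ofReal
        have := h X h1 h2
        gcongr

lemma nik_weak (m : ℕ) (q : ℝ) (hq : (m : ℝ) + 2 ≤ q) :
    ∃ C : ℝ, 0 < C ∧ ∀ δ : ℝ, 0 < δ → δ ≤ 1 → ∀ l : ℝ, 0 < l →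
    ∀ E : Set (EuclideanSpace ℝ (Fin (m+1))), MeasurableSet E → volume E ≠ ⊤ →
    ∀ F : Set (EuclideanSpace ℝ (Fin (m+1))),
    (∀ x ∈ F, ∃ p e : EuclideanSpace ℝ (Fin (m+1)), ‖e‖ = 1 ∧ x ∈ nikSeg p e ∧
      l * volume.real (nikTube δ p e) ≤ volume.real (E ∩ nikTube δ p e)) →
    volume F ≤ ENNReal.ofReal
      (C * δ ^ (-(m * (q - m - 1)) : ℝ) * volume.real E ^ (q - m : ℝ) * l ^ (-q)) := by
  have hv := nikV_pos (m+1)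
  set v := nikV (m+1) with hvdef
  obtain ⟨C0, hC0, hb⟩ := nik_bush m
  refine ⟨C0 * v * (2 / v) ^ (q - (m + 2 : ℝ)), by positivity, ?_⟩
  intro δ hδ hδ1 l hl E hE hEf F hF
  rcases F.eq_empty_or_nonempty with rfl | ⟨x0, hx0⟩
  · simp
  have hlow : l * (v / 2 * δ ^ m) ≤ volume.real E := by
    obtain ⟨p, e, he, _, h⟩ := hF x0 hx0
    have h1 := nikTube_vol (n := m+1) (by omega) hδ p e he
    calc _ ≤ l * volume.real (nikTube δ p e) := by gcongr; exact h1
      _ ≤ _ := h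
      _ ≤ _ := measureReal_mono Set.inter_subset_left hEf
  set A := volume.real E with hA
  have hAp : 0 < A := lt_of_lt_of_le (by positivity) hlow
  choose! P D hPD using hF
  have h1 : volume F ≤ ENNReal.ofReal
      (C0 * A ^ 2 / (l ^ (m + 2) * δ ^ (2 * m + 1)) * (δ ^ (m+1) * v)) := by
    refine nik_pack hδ F fun X hXF hsep => ?_
    rw [le_div_iff₀ (by positivity)]
    exact hb δ hδ hδ1 l hl E hE hEf X hsep P D (fun x hx => hPD x (hXF hx))
  refine h1.trans (ENNReal.ofReal_le_ofReal ?_)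
  have hu : 1 ≤ 2 / v * A / (l * δ ^ m) := by
    rw [le_div_iff₀ (by positivity), div_mul_eq_mul_div, le_div_iff₀ hv]
    linarith
  have hu' : 1 ≤ (2 / v * A / (l * δ ^ m)) ^ (q - (m + 2 : ℝ)) :=
    Real.one_le_rpow hu (by linarith)
  calc C0 * A ^ 2 / (l ^ (m + 2) * δ ^ (2 * m + 1)) * (δ ^ (m+1) * v)
      = C0 * v * A ^ 2 / (l ^ (m + 2) * δ ^ m) := by
        have : δ ^ (2 * m + 1) = δ ^ m * δ ^ (m + 1) := by ring
        rw [this]; field_simp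
    _ ≤ C0 * v * A ^ 2 / (l ^ (m + 2) * δ ^ m) * (2 / v * A / (l * δ ^ m)) ^ (q - (m + 2 : ℝ)) :=
        le_mul_of_one_le_right (by positivity) hu'
    _ = _ := by
        rw [Real.div_rpow (by positivity) (by positivity), Real.mul_rpow (by positivity) hAp.le,
          Real.mul_rpow hl.le (by positivity)]
        have e1 : A ^ (q - m : ℝ) = A ^ 2 * A ^ (q - (m + 2 : ℝ)) := by
          rw [← Real.rpow_natCast A 2, ← Real.rpow_add hAp]; congr 1; push_cast; ring
        have e2 : l ^ (-q) = (l ^ (m+2) * l ^ (q - (m + 2 : ℝ)))⁻¹ := by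
          rw [← Real.rpow_natCast l (m+2), ← Real.rpow_add hl, ← Real.rpow_neg hl.le]
          congr 1; push_cast; ring
        have e3 : δ ^ (-(m * (q - m - 1)) : ℝ) = (δ ^ m * (δ ^ m) ^ (q - (m + 2 : ℝ)))⁻¹ := by
          rw [← Real.rpow_natCast δ m, ← Real.rpow_mul hδ.le, ← Real.rpow_add hδ,
            ← Real.rpow_neg hδ.le]
          congr 1; ring
        rw [e1, e2, e3]
        field_simp

/-- maximal function for nonnegative extended functions -/
noncomputable def nikMaxE {n : ℕ} (δ : ℝ) (g : EuclideanSpace ℝ (Fin n) → ℝ≥0∞)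
    (x : EuclideanSpace ℝ (Fin n)) : ℝ≥0∞ :=
  ⨆ (p : EuclideanSpace ℝ (Fin n)) (e : EuclideanSpace ℝ (Fin n)) (_ : ‖e‖ = 1)
    (_ : x ∈ nikSeg p e),
    (∫⁻ y in nikTube δ p e, g y) / volume (nikTube δ p e)

lemma nik_dyadic (t : ℝ≥0∞) (L : ℕ) (h : t < 2 ^ L) :
    t ≤ 1 + ∑ k ∈ Finset.range L, 2 ^ (k+1) * (if 2 ^ k ≤ t then 1 else 0) := by
  induction L with
  | zero => simp at h ⊢; exact h.le
  | succ L ih =>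
    rw [Finset.sum_range_succ, ← add_assoc]
    rcases lt_or_ge t (2 ^ L) with h1 | h1
    · exact (ih h1).trans le_self_add
    · rw [if_pos h1, mul_one]
      exact h.le.trans le_add_self

lemma nik_dyadic2 (t : ℝ≥0∞) (q : ℝ) (hq : 0 ≤ q) (L : ℕ) (h : t ≤ 2 ^ (L + 2)) :
    t ^ q ≤ 4 ^ q + ∑ j ∈ Finset.range L, (2 ^ (j+3)) ^ q * (if 2 ^ (j+2) < t then 1 else 0) := by
  induction L with
  | zero =>
    simp only [Finset.range_zero, Finset.sum_empty, add_zero]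
    have : t ≤ 4 := by refine h.trans ?_; norm_num
    gcongr
  | succ L ih =>
    rw [Finset.sum_range_succ, ← add_assoc]
    rcases le_or_gt t (2 ^ (L+2)) with h1 | h1
    · exact (ih h1).trans le_self_add
    · rw [if_pos h1, mul_one]
      refine le_trans ?_ le_add_self
      gcongr

lemma nik_ptwise (t : ℝ≥0∞) (p : ℝ) (hp : 1 < p) (L : ℕ) :
    t ≤ 1 + ∑ k ∈ Finset.range L, 2 ^ (k+1) * (if 2 ^ k ≤ t then 1 else 0)
      + ENNReal.ofReal ((2:ℝ) ^ (-(L * (p - 1)))) * t ^ p := by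
  rcases lt_or_ge t (2 ^ L) with h | h
  · exact (nik_dyadic t L h).trans le_self_add
  refine le_trans ?_ le_add_self
  rcases eq_or_ne t ⊤ with rfl | ht
  · rw [ENNReal.top_rpow_of_pos (by linarith), ENNReal.mul_top]
    simp; positivity
  lift t to NNReal using ht
  have h' : (2:ℝ) ^ L ≤ t := by exact_mod_cast h
  have htp : (0:ℝ) < t := lt_of_lt_of_le (by positivity) h'
  rw [← ENNReal.ofReal_coe_nnreal, ENNReal.ofReal_rpow_of_pos htp, ← ENNReal.ofReal_mul (by positivity)]
  apply ENNReal.ofReal_le_ofReal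
  have h2 : ((2:ℝ) ^ L) ^ (p - 1) ≤ (t:ℝ) ^ (p - 1) := by
    apply Real.rpow_le_rpow (by positivity) h' (by linarith)
  have h3 : (t:ℝ) ^ p = t * (t:ℝ) ^ (p - 1) := by
    rw [Real.rpow_sub_one htp.ne']; field_simp
  have h4 : ((2:ℝ) ^ L) ^ (p - 1) = (2:ℝ) ^ (L * (p - 1)) := by
    rw [← Real.rpow_natCast, ← Real.rpow_mul (by norm_num)]
  rw [h3, Real.rpow_neg (by norm_num), ← h4, inv_mul_eq_div, le_div_iff₀ (by positivity)]
  gcongr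

lemma nik_avg {m : ℕ} {p δ : ℝ} (hp : 1 < p) (hδ : 0 < δ) (L : ℕ)
    (hL : (2:ℝ) ^ (-(L * (p - 1))) ≤ nikV (m+1) / 2 * δ ^ m)
    (g : EuclideanSpace ℝ (Fin (m+1)) → ℝ≥0∞) (hg : Measurable g) (hg1 : ∫⁻ y, g y ^ p ≤ 1)
    (P e : EuclideanSpace ℝ (Fin (m+1))) (he : ‖e‖ = 1) :
    (∫⁻ y in nikTube δ P e, g y) / volume (nikTube δ P e) ≤
      ENNReal.ofReal (2 + ∑ k ∈ Finset.range L, 2 ^ (k+1) *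
        (volume.real ({y | 2 ^ k ≤ g y} ∩ nikTube δ P e) / volume.real (nikTube δ P e))) := by
  have hv := nikV_pos (m+1)
  set T := nikTube δ P e with hT
  have hTv : nikV (m+1) / 2 * δ ^ m ≤ volume.real T := nikTube_vol (n := m+1) (by omega) hδ P e he
  have hTf : volume T < ⊤ := nikTube_fin _ _ _ he
  have hTp : 0 < volume.real T := lt_of_lt_of_le (by positivity) hTv
  have hT0 : volume T ≠ 0 := by
    intro h; rw [measureReal_def, h] at hTp; simp at hTp
  have hG : ∀ k : ℕ, MeasurableSet {y | 2 ^ k ≤ g y} := fun k => measurableSet_le measurable_const hg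
  have hGT : ∀ k : ℕ, volume ({y | 2 ^ k ≤ g y} ∩ T) ≠ ⊤ := fun k =>
    ((measure_mono Set.inter_subset_right).trans_lt hTf).ne
  have hTint : ∀ k : ℕ, ∫⁻ y in T, (2:ℝ≥0∞) ^ (k+1) * (if 2 ^ k ≤ g y then 1 else 0) =
      ENNReal.ofReal (2 ^ (k+1) * volume.real ({y | 2 ^ k ≤ g y} ∩ T)) := by
    intro k
    have e0 : (fun y => (if 2 ^ k ≤ g y then (1:ℝ≥0∞) else 0)) = {y | 2 ^ k ≤ g y}.indicator 1 := by
      ext y; simp [Set.indicator_apply]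
    rw [lintegral_const_mul', e0, lintegral_indicator_one (hG k), Measure.restrict_apply (hG k),
      ENNReal.ofReal_mul (by positivity), ofReal_measureReal (hGT k), ENNReal.ofReal_pow (by norm_num)]
    · norm_num
    · exact ENNReal.pow_ne_top (by norm_num)
  have h1 : ∫⁻ y in T, g y ≤ ENNReal.ofReal (volume.real T + ∑ k ∈ Finset.range L, 2 ^ (k+1) *
        volume.real ({y | 2 ^ k ≤ g y} ∩ T) + volume.real T) := by
    calc ∫⁻ y in T, g y ≤ ∫⁻ y in T, (1 + ∑ k ∈ Finset.range L, 2 ^ (k+1) *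
          (if 2 ^ k ≤ g y then 1 else 0)
          + ENNReal.ofReal ((2:ℝ) ^ (-(L * (p - 1)))) * g y ^ p) :=
          lintegral_mono fun y => nik_ptwise (g y) p hp L
      _ = volume T + ∑ k ∈ Finset.range L, ENNReal.ofReal (2 ^ (k+1) *
            volume.real ({y | 2 ^ k ≤ g y} ∩ T)) +
            ENNReal.ofReal ((2:ℝ) ^ (-(L * (p - 1)))) * ∫⁻ y in T, g y ^ p := by
          have hm : ∀ k : ℕ, Measurable fun y => (2:ℝ≥0∞) ^ (k+1) * (if 2 ^ k ≤ g y then 1 else 0) :=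
            fun k => (Measurable.ite (hG k) measurable_const measurable_const).const_mul _
          rw [lintegral_add_right _ ((hg.pow_const p).const_mul _), lintegral_add_left measurable_const,
            lintegral_finsetSum _ (fun k _ => hm k), lintegral_const_mul _ (hg.pow_const p)]
          simp only [hTint]
          simp
      _ ≤ ENNReal.ofReal (volume.real T) + ENNReal.ofReal (∑ k ∈ Finset.range L, 2 ^ (k+1) *
            volume.real ({y | 2 ^ k ≤ g y} ∩ T)) + ENNReal.ofReal (volume.real T) := by
          rw [ENNReal.ofReal_sum_of_nonneg (fun k _ => by positivity), ofReal_measureReal hTf.ne]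
          gcongr
          calc _ ≤ ENNReal.ofReal ((2:ℝ) ^ (-(L * (p - 1)))) * 1 := by
                gcongr
                exact (setLIntegral_le_lintegral _ _).trans hg1
            _ ≤ ENNReal.ofReal (volume.real T) := by
                rw [mul_one]; exact ENNReal.ofReal_le_ofReal (hL.trans hTv)
            _ = _ := ofReal_measureReal hTf.ne
      _ = _ := by
          rw [ENNReal.ofReal_add (by positivity) (by positivity), ENNReal.ofReal_add (by positivity) (by positivity)]
  rw [ENNReal.div_le_iff hT0 hTf.ne]
  refine h1.trans (le_of_eq ?_)
  conv_rhs => rw [← ofReal_measureReal hTf.ne]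
  rw [← ENNReal.ofReal_mul (by positivity)]
  congr 1
  rw [add_mul, Finset.sum_mul]
  have : ∀ k ∈ Finset.range L, 2 ^ (k+1) *
        (volume.real ({y | 2 ^ k ≤ g y} ∩ T) / volume.real T) * volume.real T =
        2 ^ (k+1) * volume.real ({y | 2 ^ k ≤ g y} ∩ T) := by
    intro k _; field_simp
  rw [Finset.sum_congr rfl this]; ring

lemma nik_strong (m : ℕ) (p q : ℝ) (hp : 1 < p) (hq : (m : ℝ) + 2 ≤ q) (hpq : p * (q - m) = q)
    (K : Set (EuclideanSpace ℝ (Fin (m+1)))) (hK : volume K ≠ ⊤) :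
    ∃ C : ℝ, 0 < C ∧ ∀ δ : ℝ, 0 < δ → δ ≤ 1 → ∀ L : ℕ, 1 ≤ L →
    (2:ℝ) ^ (-(L * (p - 1))) ≤ nikV (m+1) / 2 * δ ^ m →
    ∀ g : EuclideanSpace ℝ (Fin (m+1)) → ℝ≥0∞, Measurable g → ∫⁻ y, g y ^ p ≤ 1 →
    ∫⁻ x in K, nikMaxE δ g x ^ q ≤ ENNReal.ofReal (4 ^ q * volume.real K +
      C * L ^ (q + 2) * δ ^ (-(m * (q - m - 1)) : ℝ)) := by
  have hv := nikV_pos (m+1)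
  have hm0 : (0:ℝ) ≤ m := by positivity
  have hq0 : 0 < q := by linarith
  obtain ⟨C, hC, hweak⟩ := nik_weak m q hq
  refine ⟨C * 4 ^ q * 2 ^ q, by positivity, ?_⟩
  intro δ hδ hδ1 L hL1 hL g hg hg1
  have hLp : (0:ℝ) < L := by exact_mod_cast hL1
  have hG : ∀ k : ℕ, MeasurableSet {y | 2 ^ k ≤ g y} := fun k => measurableSet_le measurable_const hg
  have hGv : ∀ k : ℕ, volume {y | 2 ^ k ≤ g y} ≤ ENNReal.ofReal ((2:ℝ) ^ (-(k * p))) := by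
    intro k
    have h1 := mul_meas_ge_le_lintegral₀ (μ := volume) (hg.pow_const p).aemeasurable ((2 ^ k : ℝ≥0∞) ^ p)
    have h2 : {y | 2 ^ k ≤ g y} = {y | ((2:ℝ≥0∞) ^ k) ^ p ≤ g y ^ p} := by
      ext y; simp only [Set.mem_ofPred_eq]
      rw [ENNReal.rpow_le_rpow_iff (by linarith)]
    rw [← h2] at h1
    have h3 : ((2:ℝ≥0∞) ^ k) ^ p = ENNReal.ofReal ((2:ℝ) ^ (k * p)) := by
      rw [← ENNReal.rpow_natCast, ← ENNReal.rpow_mul, ← ENNReal.ofReal_rpow_of_pos (by norm_num)]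
      norm_num
    rw [h3] at h1
    have h4 : 0 < (2:ℝ) ^ (k * p) := by positivity
    rw [Real.rpow_neg (by norm_num), ENNReal.ofReal_inv_of_pos h4, ← one_div,
      ENNReal.le_div_iff_mul_le (Or.inl (by simpa using h4)) (Or.inl ENNReal.ofReal_ne_top), mul_comm]
    exact h1.trans hg1
  have hGf : ∀ k : ℕ, volume {y | 2 ^ k ≤ g y} ≠ ⊤ := fun k =>
    ((hGv k).trans_lt ENNReal.ofReal_lt_top).ne
  have hGr : ∀ k : ℕ, volume.real {y | 2 ^ k ≤ g y} ^ (q - m : ℝ) ≤ (2:ℝ) ^ (-(k * q)) := by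
    intro k
    have h1 : volume.real {y | 2 ^ k ≤ g y} ≤ (2:ℝ) ^ (-(k * p)) :=
      ENNReal.toReal_le_of_le_ofReal (by positivity) (hGv k)
    calc _ ≤ ((2:ℝ) ^ (-(k * p))) ^ (q - m : ℝ) :=
          Real.rpow_le_rpow measureReal_nonneg h1 (by linarith)
      _ = _ := by
          rw [← Real.rpow_mul (by norm_num)]; congr 1
          linear_combination (-(k:ℝ)) * hpq
  -- upper bound
  have hup : ∀ x, nikMaxE δ g x ≤ 2 ^ (L + 2) := by
    intro x
    refine iSup_le fun P => iSup_le fun e => iSup_le fun he => iSup_le fun hx => ?_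
    refine (nik_avg hp hδ L hL g hg hg1 P e he).trans ?_
    have h2 : (2:ℝ≥0∞) ^ (L + 2) = ENNReal.ofReal (2 ^ (L+2)) := by
      rw [ENNReal.ofReal_pow (by norm_num)]; norm_num
    rw [h2]
    apply ENNReal.ofReal_le_ofReal
    have h3 : ∀ N : ℕ, ∑ k ∈ Finset.range N, (2:ℝ) ^ (k+1) = 2 ^ (N+1) - 2 := by
      intro N
      induction N with
      | zero => norm_num
      | succ N ih => rw [Finset.sum_range_succ, ih]; ring
    have h4 : ∑ k ∈ Finset.range L, 2 ^ (k+1) *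
        (volume.real ({y | 2 ^ k ≤ g y} ∩ nikTube δ P e) / volume.real (nikTube δ P e)) ≤
        ∑ k ∈ Finset.range L, (2:ℝ) ^ (k+1) := by
      refine Finset.sum_le_sum fun k _ => ?_
      refine mul_le_of_le_one_right (by positivity) ?_
      refine div_le_one_of_le₀ ?_ measureReal_nonneg
      exact measureReal_mono Set.inter_subset_right (nikTube_fin _ _ _ he).ne
    rw [h3] at h4
    have h5 : (2:ℝ) ^ (L+2) = 2 * 2 ^ (L+1) := by ring
    have h6 : (0:ℝ) < 2 ^ (L+1) := by positivity
    linarith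
  -- level sets
  have hlev : ∀ j : ℕ, volume {x | 2 ^ (j+2) < nikMaxE δ g x} ≤
      ENNReal.ofReal (C * 4 ^ q * L ^ (q + 1) * δ ^ (-(m * (q - m - 1)) : ℝ) *
        ((2:ℝ) ^ (j + 2)) ^ (-q)) := by
    intro j
    let l : ℕ → ℝ := fun k => 2 ^ (j+1) / (L * 2 ^ (k+1))
    have hl : ∀ k, 0 < l k := fun k => by positivity
    let F : ℕ → Set (EuclideanSpace ℝ (Fin (m+1))) := fun k => {x | ∃ P e : EuclideanSpace ℝ (Fin (m+1)),
      ‖e‖ = 1 ∧ x ∈ nikSeg P e ∧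
      l k * volume.real (nikTube δ P e) ≤ volume.real ({y | 2 ^ k ≤ g y} ∩ nikTube δ P e)}
    have hsub : {x | 2 ^ (j+2) < nikMaxE δ g x} ⊆ ⋃ k ∈ Finset.range L, F k := by
      intro x hx
      simp only [Set.mem_ofPred_eq, nikMaxE, lt_iSup_iff] at hx
      obtain ⟨P, e, he, hxs, hx⟩ := hx
      have h1 := hx.trans_le (nik_avg hp hδ L hL g hg hg1 P e he)
      have h2 : (2:ℝ≥0∞) ^ (j + 2) = ENNReal.ofReal (2 ^ (j+2)) := by
        rw [ENNReal.ofReal_pow (by norm_num)]; norm_num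
      rw [h2] at h1
      have h3 := (ENNReal.ofReal_lt_ofReal_iff_of_nonneg (by positivity)).1 h1
      have hTp : 0 < volume.real (nikTube δ P e) :=
        lt_of_lt_of_le (by positivity) (nikTube_vol (n := m+1) (by omega) hδ P e he)
      by_contra hc
      simp only [Set.mem_iUnion, not_exists] at hc
      have h4 : ∀ k ∈ Finset.range L, 2 ^ (k+1) *
        (volume.real ({y | 2 ^ k ≤ g y} ∩ nikTube δ P e) / volume.real (nikTube δ P e)) ≤
          2 ^ (j+1) / L := by
        intro k hk
        have h5 : volume.real ({y | 2 ^ k ≤ g y} ∩ nikTube δ P e) ≤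
            l k * volume.real (nikTube δ P e) := by
          by_contra! h6
          exact hc k hk ⟨P, e, he, hxs, h6.le⟩
        calc _ ≤ 2 ^ (k+1) * l k := by
              gcongr
              rw [div_le_iff₀ hTp]; exact h5
          _ = _ := by simp only [l]; field_simp
      have h7 := Finset.sum_le_sum h4
      rw [Finset.sum_const, Finset.card_range, nsmul_eq_mul, mul_div_cancel₀ _ hLp.ne'] at h7
      have h8 : (2:ℝ) ^ (j+2) = 2 * 2 ^ (j+1) := by ring
      have h9 : (2:ℝ) ≤ 2 ^ (j+1) := by
        rw [pow_succ]
        have : (1:ℝ) ≤ 2 ^ j := one_le_pow₀ (by norm_num)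
        linarith
      linarith
    have hF : ∀ k, volume (F k) ≤ ENNReal.ofReal (C * 4 ^ q * L ^ q * δ ^ (-(m * (q - m - 1)) : ℝ) *
        ((2:ℝ) ^ (j + 2)) ^ (-q)) := by
      intro k
      refine (hweak δ hδ hδ1 (l k) (hl k) _ (hG k) (hGf k) (F k) (fun x hx => hx)).trans ?_
      apply ENNReal.ofReal_le_ofReal
      calc _ ≤ C * δ ^ (-(m * (q - m - 1)) : ℝ) * (2:ℝ) ^ (-(k * q)) * l k ^ (-q) := by
            gcongr; exact hGr k
        _ = _ := by
            have e1 : l k = 2 ^ (j+2) * (4 * (L:ℝ) * 2 ^ k)⁻¹ := by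
              simp only [l]; field_simp; ring
            have e2 : l k ^ (-q) = ((2:ℝ) ^ (j + 2)) ^ (-q) * (4 ^ q * L ^ q * (2:ℝ) ^ (k * q)) := by
              rw [e1, Real.mul_rpow (by positivity) (by positivity), Real.inv_rpow (by positivity),
                Real.rpow_neg (by positivity : (0:ℝ) ≤ 4 * L * 2 ^ k), inv_inv,
                Real.mul_rpow (by positivity) (by positivity), Real.mul_rpow (by positivity) (by positivity),
                Real.rpow_mul (by norm_num), Real.rpow_natCast]
            have e3 : (2:ℝ) ^ (-(k * q)) * (2:ℝ) ^ (k * q) = 1 := by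
              rw [← Real.rpow_add (by norm_num)]; simp
            rw [e2]
            linear_combination (C * δ ^ (-(m * (q - m - 1)) : ℝ) * (4 ^ q * L ^ q) *
              ((2:ℝ) ^ (j + 2)) ^ (-q)) * e3
    calc _ ≤ volume (⋃ k ∈ Finset.range L, F k) := measure_mono hsub
      _ ≤ ∑ k ∈ Finset.range L, volume (F k) := measure_biUnion_finset_le _ _
      _ ≤ ∑ k ∈ Finset.range L, ENNReal.ofReal (C * 4 ^ q * L ^ q * δ ^ (-(m * (q - m - 1)) : ℝ) *
        ((2:ℝ) ^ (j + 2)) ^ (-q)) := Finset.sum_le_sum fun k _ => hF k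
      _ = _ := by
        rw [Finset.sum_const, Finset.card_range, nsmul_eq_mul, ← ENNReal.ofReal_natCast,
          ← ENNReal.ofReal_mul (by positivity)]
        congr 1
        rw [Real.rpow_add_one hLp.ne']; ring
  let H : ℕ → Set (EuclideanSpace ℝ (Fin (m+1))) := fun j =>
    toMeasurable volume {x | 2 ^ (j+2) < nikMaxE δ g x}
  have hHm : ∀ j, MeasurableSet (H j) := fun j => measurableSet_toMeasurable _ _
  calc ∫⁻ x in K, nikMaxE δ g x ^ q ≤ ∫⁻ x in K, (4 ^ q + ∑ j ∈ Finset.range L,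
        (2 ^ (j+3)) ^ q * (H j).indicator 1 x) := by
        refine lintegral_mono fun x => (nik_dyadic2 _ q hq0.le L (hup x)).trans ?_
        gcongr with j hj
        split_ifs with h
        · have : x ∈ H j := subset_toMeasurable _ _ h
          simp [this]
        · exact zero_le
    _ = 4 ^ q * volume K + ∑ j ∈ Finset.range L, (2 ^ (j+3)) ^ q * volume.restrict K (H j) := by
        rw [lintegral_add_left measurable_const, lintegral_finsetSum]
        · simp only [lintegral_const, Measure.restrict_apply_univ]
          congr 1
          refine Finset.sum_congr rfl fun j _ => ?_
          rw [lintegral_const_mul _ (measurable_one.indicator (hHm j)), lintegral_indicator_one (hHm j)]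
        · intro j _; exact (measurable_one.indicator (hHm j)).const_mul _
    _ ≤ ENNReal.ofReal (4 ^ q * volume.real K) + ∑ j ∈ Finset.range L,
          ENNReal.ofReal (C * 4 ^ q * 2 ^ q * L ^ (q + 1) * δ ^ (-(m * (q - m - 1)) : ℝ)) := by
        refine add_le_add (le_of_eq ?_) (Finset.sum_le_sum fun j _ => ?_)
        · rw [ENNReal.ofReal_mul (by positivity), ofReal_measureReal hK,
            ← ENNReal.ofReal_rpow_of_pos (by norm_num)]
          norm_num
        · have h1 : volume.restrict K (H j) ≤ volume {x | 2 ^ (j+2) < nikMaxE δ g x} :=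
            (Measure.restrict_apply_le _ _).trans (measure_toMeasurable _).le
          have h2 : ((2:ℝ≥0∞) ^ (j+3)) ^ q = ENNReal.ofReal (((2:ℝ) ^ (j+3)) ^ q) := by
            rw [← ENNReal.ofReal_rpow_of_pos (by positivity), ENNReal.ofReal_pow (by norm_num)]
            norm_num
          calc _ ≤ ENNReal.ofReal (((2:ℝ) ^ (j+3)) ^ q) * ENNReal.ofReal (C * 4 ^ q * L ^ (q + 1) *
                δ ^ (-(m * (q - m - 1)) : ℝ) * ((2:ℝ) ^ (j + 2)) ^ (-q)) := by
                rw [h2]; gcongr; exact h1.trans (hlev j)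
            _ = _ := by
                rw [← ENNReal.ofReal_mul (by positivity)]
                congr 1
                have : ((2:ℝ) ^ (j+3)) ^ q = 2 ^ q * ((2:ℝ) ^ (j+2)) ^ q := by
                  rw [← Real.mul_rpow (by norm_num) (by positivity)]; congr 1; ring
                rw [this, Real.rpow_neg (by positivity : (0:ℝ) ≤ 2 ^ (j+2))]
                field_simp
    _ = _ := by
        rw [Finset.sum_const, Finset.card_range, nsmul_eq_mul, ← ENNReal.ofReal_natCast,
          ← ENNReal.ofReal_mul (by positivity), ← ENNReal.ofReal_add (by positivity) (by positivity)]
        have e1 : (L:ℝ) ^ (q + 2) = (L:ℝ) ^ (q + 1) * L := by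
          rw [← Real.rpow_add_one hLp.ne']; congr 1; ring
        rw [e1]; congr 1; ring

lemma nik_chooseL (m : ℕ) (p η : ℝ) (hp : 1 < p) (hη : 0 < η) :
    ∃ C : ℝ, 0 < C ∧ ∀ δ : ℝ, 0 < δ → δ ≤ 1 → ∃ L : ℕ, 1 ≤ L ∧
      (2:ℝ) ^ (-(L * (p - 1))) ≤ nikV (m+1) / 2 * δ ^ m ∧ (L : ℝ) ≤ C * δ ^ (-η) := by
  have hv := nikV_pos (m+1)
  set v := nikV (m+1) with hvd
  have hl2 : 0 < Real.log 2 := Real.log_pos (by norm_num)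
  have hp' : 0 < p - 1 := by linarith
  set D := Real.log 2 * (p - 1) with hD
  have hDp : 0 < D := by positivity
  refine ⟨|Real.log (v / 2)| / D + m / η / D + 2, by positivity, ?_⟩
  intro δ hδ hδ1
  have hlogδ : Real.log δ ≤ 0 := Real.log_nonpos hδ.le hδ1
  set t := (|Real.log (v / 2)| + m * (-Real.log δ)) / D with ht
  have ht0 : 0 ≤ t := by
    have : 0 ≤ (m:ℝ) * (-Real.log δ) := mul_nonneg (by positivity) (by linarith)
    positivity
  refine ⟨⌈t⌉₊ + 1, by omega, ?_, ?_⟩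
  · have h1 : t ≤ ((⌈t⌉₊ + 1 : ℕ) : ℝ) := by
      push_cast; linarith [Nat.le_ceil t]
    rw [← Real.log_le_log_iff (by positivity) (by positivity), Real.log_rpow (by norm_num),
      Real.log_mul (by positivity) (by positivity), Real.log_pow]
    rw [ht, div_le_iff₀ hDp] at h1
    have := neg_abs_le (Real.log (v / 2))
    rw [hD] at h1
    linarith
  · have h1 : ((⌈t⌉₊ + 1 : ℕ) : ℝ) ≤ t + 2 := by
      push_cast; linarith [Nat.ceil_lt_add_one ht0]
    have h2 : 1 ≤ δ ^ (-η) := Real.one_le_rpow_of_pos_of_le_one_of_nonpos hδ hδ1 (by linarith)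
    have h3 : -Real.log δ ≤ δ ^ (-η) / η := by
      have := Real.log_le_rpow_div (inv_nonneg.2 hδ.le) hη
      rw [Real.log_inv, Real.inv_rpow hδ.le, ← Real.rpow_neg hδ.le] at this
      exact this
    calc _ ≤ t + 2 := h1
      _ = |Real.log (v / 2)| / D * 1 + m * (-Real.log δ) / D + 2 * 1 := by rw [ht]; ring
      _ ≤ |Real.log (v / 2)| / D * δ ^ (-η) + m * (δ ^ (-η) / η) / D + 2 * δ ^ (-η) := by
          gcongr
      _ = _ := by ring

lemma nikMaxE_const_mul {n : ℕ} (δ : ℝ) (g : EuclideanSpace ℝ (Fin n) → ℝ≥0∞)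
    (hg : Measurable g) (A : ℝ≥0∞) (x : EuclideanSpace ℝ (Fin n)) :
    nikMaxE δ (fun y => A * g y) x = A * nikMaxE δ g x := by
  unfold nikMaxE
  simp only [ENNReal.mul_iSup]
  simp only [lintegral_const_mul _ hg, mul_div_assoc]

/-- the Euclidean instance of the Nikodym maximal theorem:
`‖M^δ f‖_{L^q(K)} ≤ C δ^{1-n/p-ε} ‖f‖_{L^p}` for `1 < p ≤ (n+1)/2`, `q = (n-1)p/(p-1)`,
`f` supported in the fixed compact set `K`. -/
theorem stmt_9 (n : ℕ) (hn : 2 ≤ n)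
    (K : Set (EuclideanSpace ℝ (Fin n))) (hK : IsCompact K)
    (p q : ℝ) (hp1 : 1 < p) (hp2 : p ≤ ((n : ℝ) + 1)/2)
    (hq : q = ((n : ℝ) - 1) * p / (p - 1)) (ε : ℝ) (hε : 0 < ε) :
    ∃ C : ℝ, 0 < C ∧
      ∀ δ : ℝ, δ ∈ Set.Ioc (0:ℝ) 1 →
        ∀ f : EuclideanSpace ℝ (Fin n) → ℝ, Measurable f → (∀ x, x ∉ K → f x = 0) →
          (∫⁻ x in K, (nikMax δ f x) ^ q) ^ (1/q) ≤
            ENNReal.ofReal (C * δ ^ (1 - (n : ℝ)/p - ε)) *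
              (∫⁻ x, (ENNReal.ofReal |f x|) ^ p) ^ (1/p) := by
  obtain ⟨m, rfl⟩ : ∃ m, n = m + 1 := ⟨n - 1, by omega⟩
  have hm : (1:ℝ) ≤ m := by exact_mod_cast (by omega : 1 ≤ m)
  push_cast at hp2 hq ⊢
  have hp' : 0 < p - 1 := by linarith
  have hp0 : 0 < p := by linarith
  have hqm : q * (p - 1) = m * p := by rw [hq]; field_simp; ring
  have hq2 : (m:ℝ) + 2 ≤ q := by
    by_contra! hc
    nlinarith
  have hq0 : 0 < q := by linarith
  have hpq : p * (q - m) = q := by linarith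
  set η := ε * q / (q + 2) with hη
  have hηp : 0 < η := by positivity
  have hKf : volume K ≠ ⊤ := hK.measure_lt_top.ne
  obtain ⟨C1, hC1, hS⟩ := nik_strong m p q hp1 hq2 hpq K hKf
  obtain ⟨C2, hC2, hLL⟩ := nik_chooseL m p η hp1 hηp
  set C3 : ℝ := 4 ^ q * volume.real K + C1 * C2 ^ (q + 2) with hC3
  have hC3p : 0 < C3 := by
    have : 0 ≤ volume.real K := measureReal_nonneg
    positivity
  refine ⟨C3 ^ (1 / q), by positivity, ?_⟩
  rintro δ ⟨hδ, hδ1⟩ f hf -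
  have hgen : ∀ g : EuclideanSpace ℝ (Fin (m+1)) → ℝ≥0∞, Measurable g → ∫⁻ y, g y ^ p ≤ 1 →
      (∫⁻ x in K, nikMaxE δ g x ^ q) ^ (1 / q) ≤
        ENNReal.ofReal (C3 ^ (1 / q) * δ ^ (1 - ((m:ℝ) + 1) / p - ε)) := by
    intro g hg hg1
    obtain ⟨L, hL1, hL2, hL3⟩ := hLL δ hδ hδ1
    have h1 := hS δ hδ hδ1 L hL1 hL2 g hg hg1
    have hexp : -(m * (q - m - 1)) - ε * q = (1 - ((m:ℝ) + 1) / p - ε) * q := by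
      have : q / p = q - m := by rw [div_eq_iff hp0.ne']; linarith
      have e : (1 - ((m:ℝ) + 1) / p - ε) * q = q - (m + 1) * (q / p) - ε * q := by ring
      rw [e, this]; ring
    have hneg : -(m * (q - m - 1)) - ε * q ≤ 0 := by
      have : 0 ≤ (m:ℝ) * (q - m - 1) := mul_nonneg (by linarith) (by linarith)
      have : 0 < ε * q := by positivity
      linarith
    have h2 : 4 ^ q * volume.real K + C1 * L ^ (q + 2) * δ ^ (-(m * (q - m - 1)) : ℝ) ≤
        C3 * δ ^ (-(m * (q - m - 1)) - ε * q) := by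
      have a1 : (L:ℝ) ^ (q + 2) ≤ C2 ^ (q+2) * δ ^ (-(ε * q)) := by
        calc (L:ℝ) ^ (q + 2) ≤ (C2 * δ ^ (-η)) ^ (q + 2) := by gcongr
          _ = _ := by
            rw [Real.mul_rpow hC2.le (by positivity), ← Real.rpow_mul hδ.le]
            congr 2
            rw [hη]; field_simp
      have a2 : 1 ≤ δ ^ (-(m * (q - m - 1)) - ε * q) :=
        Real.one_le_rpow_of_pos_of_le_one_of_nonpos hδ hδ1 hneg
      have a3 : δ ^ (-(m * (q - m - 1)) - ε * q) = δ ^ (-(ε * q)) * δ ^ (-(m * (q - m - 1)) : ℝ) := by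
        rw [← Real.rpow_add hδ]; congr 1; ring
      rw [hC3, add_mul]
      refine add_le_add ?_ ?_
      · exact le_mul_of_one_le_right (by have : 0 ≤ volume.real K := measureReal_nonneg
                                         positivity) a2
      · rw [a3]
        calc _ ≤ C1 * (C2 ^ (q+2) * δ ^ (-(ε * q))) * δ ^ (-(m * (q - m - 1)) : ℝ) := by gcongr
          _ = _ := by ring
    calc _ ≤ (ENNReal.ofReal (C3 * δ ^ (-(m * (q - m - 1)) - ε * q))) ^ (1 / q) := by
          gcongr
          exact h1.trans (ENNReal.ofReal_le_ofReal h2)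
      _ = _ := by
          rw [ENNReal.ofReal_rpow_of_pos (by positivity), Real.mul_rpow hC3p.le (by positivity),
            ← Real.rpow_mul hδ.le, hexp]
          congr 3
          field_simp
  set h : EuclideanSpace ℝ (Fin (m+1)) → ℝ≥0∞ := fun y => ENNReal.ofReal |f y| with hh
  have hhm : Measurable h := hf.abs.ennreal_ofReal
  have hM : ∀ x, nikMax δ f x = nikMaxE δ h x := fun x => rfl
  simp only [hM]
  set I := ∫⁻ x, h x ^ p with hI
  have hI' : ∫⁻ x, ENNReal.ofReal |f x| ^ p = I := rfl
  rcases eq_or_ne I 0 with h0 | h0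
  · have hz : h =ᵐ[volume] 0 := by
      have := (lintegral_eq_zero_iff (hhm.pow_const p)).1 h0
      filter_upwards [this] with y hy
      simpa [ENNReal.rpow_eq_zero_iff, hp0, hp0.not_gt] using hy
    have hz2 : ∀ x, nikMaxE δ h x = 0 := by
      intro x
      unfold nikMaxE
      have : ∀ S : Set (EuclideanSpace ℝ (Fin (m+1))), ∫⁻ y in S, h y = 0 := by
        intro S
        rw [lintegral_eq_zero_iff hhm]
        exact ae_restrict_of_ae hz
      simp [this]
    simp [hz2, hq0]
  rcases eq_or_ne I ⊤ with ht | ht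
  · rw [ht, ENNReal.top_rpow_of_pos (by positivity), ENNReal.mul_top]
    · exact le_top
    · have : 0 < C3 ^ (1 / q) * δ ^ (1 - ((m:ℝ) + 1) / p - ε) := by positivity
      simpa using this
  set A := I ^ (1 / p) with hA
  have hA0 : A ≠ 0 := by
    rw [hA]; simp [ENNReal.rpow_eq_zero_iff, h0, ht]
  have hAt : A ≠ ⊤ := ENNReal.rpow_ne_top_of_nonneg (by positivity) ht
  have hAp : A ^ p = I := by
    rw [hA, ← ENNReal.rpow_mul, one_div_mul_cancel hp0.ne', ENNReal.rpow_one]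
  set g : EuclideanSpace ℝ (Fin (m+1)) → ℝ≥0∞ := fun y => A⁻¹ * h y with hg
  have hgm : Measurable g := hhm.const_mul _
  have hg1 : ∫⁻ y, g y ^ p ≤ 1 := by
    simp only [hg, ENNReal.mul_rpow_of_nonneg _ _ hp0.le]
    rw [lintegral_const_mul _ (hhm.pow_const p), ENNReal.inv_rpow, hAp]
    exact ENNReal.inv_mul_le_one I
  have hhg : ∀ x, nikMaxE δ h x = A * nikMaxE δ g x := by
    intro x
    rw [← nikMaxE_const_mul δ g hgm A x]
    congr 1
    ext y
    simp only [hg]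
    rw [← mul_assoc, ENNReal.mul_inv_cancel hA0 hAt, one_mul]
  simp only [hhg, ENNReal.mul_rpow_of_nonneg _ _ hq0.le]
  rw [lintegral_const_mul' _ _ (ENNReal.rpow_ne_top_of_nonneg hq0.le hAt),
    ENNReal.mul_rpow_of_nonneg _ _ (by positivity : 0 ≤ 1 / q), ← ENNReal.rpow_mul,
    mul_one_div_cancel hq0.ne', ENNReal.rpow_one, mul_comm]
  gcongr
  exact hgen g hgm hg1
end

section
/- Let n ≥ 2 and let Π ⊆ ℝⁿ be a bounded set. Define Π* to be the set of points x ∈ ℝⁿ for which there exist a unit vector e ∈ ℝⁿ and c ∈ [0,1] such that the one-dimensional Lebesgue measure of { s ∈ [0,1] : x + (s − c)·e ∈ Π } is positive (i.e., some line segment of length 1 containing x intersects Π in a set of positive length). If Π* has positive Lebesgue outer measure, then for every ε > 0 there is a constant c_ε > 0 such that for all δ ∈ (0,1], the Lebesgue measure of the open δ-neighborhood Π^δ = {y : dist(y, Π) < δ} satisfies vol(Π^δ) ≥ c_ε·δ^{(n−1)/2 + ε}. -/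
open MeasureTheory

lemma aux_count {n : ℕ} {δ μ : ℝ} (hδ : 0 < δ)
    (x e : EuclideanSpace ℝ (Fin n)) (he : ‖e‖ = 1) (T : Set ℝ)
    (Y : Finset (EuclideanSpace ℝ (Fin n)))
    (hY : ∀ t ∈ T, ∃ y ∈ Y, dist (x + t • e) y ≤ δ)
    (hT : ENNReal.ofReal μ ≤ volume T) :
    ∃ Z : Finset (EuclideanSpace ℝ (Fin n)), Z ⊆ Y ∧ μ / (4 * δ) ≤ Z.card ∧
      ∀ y ∈ Z, ∃ t ∈ T, dist (x + t • e) y ≤ δ := by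
  classical
  refine ⟨Y.filter (fun y => ∃ t ∈ T, dist (x + t • e) y ≤ δ), Finset.filter_subset _ _, ?_, ?_⟩
  swap
  · intro y hy
    exact (Finset.mem_filter.1 hy).2
  set Z := Y.filter (fun y => ∃ t ∈ T, dist (x + t • e) y ≤ δ) with hZ
  have hsub : T ⊆ ⋃ y ∈ Z, {t | dist (x + t • e) y ≤ δ} := by
    intro t ht
    obtain ⟨y, hy, hd⟩ := hY t ht
    simp only [Set.mem_iUnion]
    exact ⟨y, Finset.mem_filter.2 ⟨hy, t, ht, hd⟩, hd⟩
  have h1 : ∀ y ∈ Z, volume {t : ℝ | dist (x + t • e) y ≤ δ} ≤ ENNReal.ofReal (4 * δ) := by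
    intro y hy
    obtain ⟨t, ht, hd⟩ := (Finset.mem_filter.1 hy).2
    calc volume {t : ℝ | dist (x + t • e) y ≤ δ} ≤ volume (Metric.closedBall t (2 * δ)) := by
          apply measure_mono
          intro s hs
          have hs' : dist (x + s • e) y ≤ δ := hs
          have : dist (x + s • e) (x + t • e) ≤ 2 * δ := by
            have := dist_triangle_right (x + s • e) (x + t • e) y
            linarith
          rw [dist_add_left, dist_eq_norm, ← sub_smul, norm_smul, he, mul_one] at this
          simpa [Metric.mem_closedBall, dist_eq_norm] using this
      _ = ENNReal.ofReal (4 * δ) := by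
          rw [Real.volume_closedBall]; congr 1; ring
  have h2 : ENNReal.ofReal μ ≤ ENNReal.ofReal (Z.card * (4 * δ)) := by
    calc ENNReal.ofReal μ ≤ volume T := hT
      _ ≤ volume (⋃ y ∈ Z, {t | dist (x + t • e) y ≤ δ}) := measure_mono hsub
      _ ≤ ∑ y ∈ Z, volume {t : ℝ | dist (x + t • e) y ≤ δ} := measure_biUnion_finset_le _ _
      _ ≤ ∑ y ∈ Z, ENNReal.ofReal (4 * δ) := Finset.sum_le_sum h1
      _ = _ := by
        rw [Finset.sum_const, nsmul_eq_mul, ENNReal.ofReal_mul (p := (Z.card : ℝ)) (by positivity), ENNReal.ofReal_natCast]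
  rw [ENNReal.ofReal_le_ofReal_iff (by positivity)] at h2
  rwa [div_le_iff₀ (by positivity)]

lemma aux_geom {n : ℕ} {δ r D : ℝ} (hδ : 0 < δ) (hr : 0 < r) (M : ℤ)
    (hM : 1 / (r * δ) ≤ M)
    (x e y y' : EuclideanSpace ℝ (Fin n)) (t t' : ℝ) (ht : |t| ≤ 1) (ht' : |t'| ≤ 1)
    (htt : r ≤ |t' - t|) (hy : dist (x + t • e) y ≤ δ) (hy' : dist (x + t' • e) y' ≤ δ)
    (hD : dist y y' ≤ D) :
    ∃ k ∈ Finset.Icc (-M) M,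
      x ∈ Metric.closedBall (y + ((k : ℝ) * δ) • (y' - y)) ((2 / r + D) * δ) := by
  have hne : t' - t ≠ 0 := by
    intro h; rw [h, abs_zero] at htt; linarith
  set a : ℝ := -t / (t' - t) with ha
  have hb : 1 - a = t' / (t' - t) := by rw [ha]; field_simp; ring
  have ha1 : |a| ≤ 1 / r := by
    rw [ha, abs_div, abs_neg]
    exact div_le_div₀ zero_le_one ht hr htt
  have hb1 : |1 - a| ≤ 1 / r := by
    rw [hb, abs_div]
    exact div_le_div₀ zero_le_one ht' hr htt
  have hx : x = (1 - a) • (x + t • e) + a • (x + t' • e) := by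
    have h0 : (1 - a) * t + a * t' = 0 := by rw [hb, ha]; field_simp; ring
    have : (1 - a) • (x + t • e) + a • (x + t' • e) = x + ((1 - a) * t + a * t') • e := by
      module
    rw [this, h0]; simp
  have hfl := Int.floor_le (a / δ)
  have hfl2 := Int.lt_floor_add_one (a / δ)
  have had : |a / δ| ≤ M := by
    rw [abs_div, abs_of_pos hδ]
    refine le_trans ?_ hM
    rw [div_le_iff₀ hδ]
    refine ha1.trans (le_of_eq ?_)
    field_simp
  rw [abs_le] at had
  refine ⟨⌊a / δ⌋, ?_, ?_⟩
  · rw [Finset.mem_Icc]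
    constructor
    · rw [Int.le_floor]; push_cast; exact had.1
    · have : ((⌊a / δ⌋ : ℤ) : ℝ) ≤ M := hfl.trans had.2
      exact_mod_cast this
  · set k : ℝ := ((⌊a / δ⌋ : ℤ) : ℝ)
    have hk : |a - k * δ| ≤ δ := by
      rw [le_div_iff₀ hδ] at hfl
      rw [div_lt_iff₀ hδ] at hfl2
      rw [abs_le]; constructor <;> nlinarith
    rw [Metric.mem_closedBall, dist_eq_norm]
    have hdec : x - (y + (k * δ) • (y' - y)) =
        (1 - a) • (x + t • e - y) + a • (x + t' • e - y') + (a - k * δ) • (y' - y) := by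
      nth_rewrite 1 [hx]
      module
    rw [hdec]
    rw [dist_eq_norm] at hy hy' hD
    rw [norm_sub_rev] at hD
    calc _ ≤ ‖(1 - a) • (x + t • e - y)‖ + ‖a • (x + t' • e - y')‖ + ‖(a - k * δ) • (y' - y)‖ :=
          norm_add₃_le
      _ = |1 - a| * ‖x + t • e - y‖ + |a| * ‖x + t' • e - y'‖ + |a - k * δ| * ‖y' - y‖ := by
          simp only [norm_smul, Real.norm_eq_abs]
      _ ≤ (1 / r) * δ + (1 / r) * δ + δ * D := by gcongr
      _ = _ := by ring

lemma aux_sep {n : ℕ} {δ : ℝ} (hδ : 0 < δ) (P : Set (EuclideanSpace ℝ (Fin n)))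
    (hbdd : Bornology.IsBounded P) :
    ∃ Y : Finset (EuclideanSpace ℝ (Fin n)), (∀ y ∈ Y, y ∈ P) ∧
      (∀ y ∈ Y, ∀ y' ∈ Y, y ≠ y' → δ ≤ dist y y') ∧ ∀ p ∈ P, ∃ y ∈ Y, dist p y ≤ δ := by
  lift δ to NNReal using hδ.le
  have hδ' : (0 : NNReal) < δ := by exact_mod_cast hδ
  have hfin : Metric.packingNumber δ P ≠ ⊤ := by
    obtain ⟨N, -, hNf, hN⟩ := Metric.exists_finite_isCover_of_isCompact_closure (ε := δ / 2) (s := P)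
      (by positivity) hbdd.isCompact_closure
    have h1 := Metric.packingNumber_two_mul_le_externalCoveringNumber (δ / 2) P
    rw [mul_div_cancel₀ _ (two_ne_zero)] at h1
    have h2 : Metric.externalCoveringNumber (δ / 2) P ≤ N.encard := iInf₂_le N hN
    exact ne_top_of_le_ne_top (Set.encard_ne_top_iff.2 hNf) (h1.trans h2)
  have hYf : (Metric.maximalSeparatedSet δ P).Finite := by
    rw [← Set.encard_ne_top_iff, Metric.encard_maximalSeparatedSet hfin]; exact hfin
  refine ⟨hYf.toFinset, ?_, ?_, ?_⟩
  · intro y hy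
    exact Metric.maximalSeparatedSet_subset (hYf.mem_toFinset.1 hy)
  · intro y hy y' hy' hne
    have := Metric.isSeparated_maximalSeparatedSet (hYf.mem_toFinset.1 hy)
      (hYf.mem_toFinset.1 hy') hne
    have h2 : (δ : ENNReal) < edist y y' := this
    rw [edist_nndist, ENNReal.coe_lt_coe] at h2
    exact_mod_cast h2.le
  · intro p hp
    have := Metric.isCover_iff_subset_iUnion_closedBall.1 (Metric.isCover_maximalSeparatedSet hfin) hp
    simp only [Set.mem_iUnion] at this
    obtain ⟨y, hy, h⟩ := this
    exact ⟨y, hYf.mem_toFinset.2 hy, h⟩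

lemma aux_vol {n : ℕ} {δ : ℝ} (hδ : 0 < δ) (P : Set (EuclideanSpace ℝ (Fin n)))
    (Y : Finset (EuclideanSpace ℝ (Fin n))) (hYP : ∀ y ∈ Y, y ∈ P)
    (hsep : ∀ y ∈ Y, ∀ y' ∈ Y, y ≠ y' → δ ≤ dist y y') :
    (Y.card : ENNReal) * (ENNReal.ofReal ((δ / 2) ^ n) *
      volume (Metric.ball (0 : EuclideanSpace ℝ (Fin n)) 1)) ≤ volume (Metric.thickening δ P) := by
  have hb : ∀ y : EuclideanSpace ℝ (Fin n), volume (Metric.ball y (δ / 2)) =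
      ENNReal.ofReal ((δ / 2) ^ n) * volume (Metric.ball (0 : EuclideanSpace ℝ (Fin n)) 1) := by
    intro y
    rw [Measure.addHaar_ball_of_pos volume y (by positivity)]
    simp
  calc _ = ∑ y ∈ Y, volume (Metric.ball y (δ / 2)) := by
        rw [Finset.sum_congr rfl (fun y _ => hb y), Finset.sum_const, nsmul_eq_mul]
    _ = volume (⋃ y ∈ Y, Metric.ball y (δ / 2)) := by
        rw [measure_biUnion_finset]
        · intro y hy y' hy' hne
          apply Metric.ball_disjoint_ball
          have := hsep y hy y' hy' hne
          linarith
        · intro y _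
          exact measurableSet_ball
    _ ≤ _ := by
        apply measure_mono
        intro z hz
        simp only [Set.mem_iUnion] at hz
        obtain ⟨y, hy, hz⟩ := hz
        rw [Metric.mem_thickening_iff]
        refine ⟨y, hYP y hy, ?_⟩
        rw [Metric.mem_ball] at hz
        linarith

lemma aux_pairs {n : ℕ} {δ lam D : ℝ} (hδ : 0 < δ) (hl : 0 < lam) (M : ℤ)
    (hM : 1 / (lam / 4 * δ) ≤ M)
    (x e : EuclideanSpace ℝ (Fin n)) (he : ‖e‖ = 1) (T : Set ℝ)
    (hT1 : ∀ t ∈ T, |t| ≤ 1)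
    (Y : Finset (EuclideanSpace ℝ (Fin n)))
    (hD : ∀ y ∈ Y, ∀ y' ∈ Y, dist y y' ≤ D)
    (hY : ∀ t ∈ T, ∃ y ∈ Y, dist (x + t • e) y ≤ δ)
    (hT : ENNReal.ofReal lam ≤ volume T) :
    ENNReal.ofReal (lam ^ 2 / (32 * δ ^ 2)) ≤ ∑ y ∈ Y, ∑ y' ∈ Y, ∑ k ∈ Finset.Icc (-M) M,
      (Metric.closedBall (y + ((k : ℝ) * δ) • (y' - y)) ((2 / (lam / 4) + D) * δ)).indicator
        (fun _ => (1 : ENNReal)) x := by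
  obtain ⟨Z, hZY, hZc, hZ⟩ := aux_count hδ x e he T Y hY hT
  have hin : ∀ y ∈ Z, ENNReal.ofReal (lam / (8 * δ)) ≤ ∑ y' ∈ Y, ∑ k ∈ Finset.Icc (-M) M,
      (Metric.closedBall (y + ((k : ℝ) * δ) • (y' - y)) ((2 / (lam / 4) + D) * δ)).indicator
        (fun _ => (1 : ENNReal)) x := by
    intro y hy
    obtain ⟨t, ht, hty⟩ := hZ y hy
    have hT' : ENNReal.ofReal (lam / 2) ≤ volume (T \ Metric.ball t (lam / 4)) := by
      have h1 : volume T ≤ volume (T \ Metric.ball t (lam / 4)) + volume (Metric.ball t (lam / 4)) := by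
        refine (measure_mono ?_).trans (measure_union_le _ _)
        rw [Set.sdiff_union_self]
        exact Set.subset_union_left
      rw [Real.volume_ball] at h1
      have h2 := hT.trans h1
      have h3 : ENNReal.ofReal lam = ENNReal.ofReal (lam / 2) + ENNReal.ofReal (2 * (lam / 4)) := by
        rw [← ENNReal.ofReal_add (by positivity) (by positivity)]; congr 1; ring
      rw [h3] at h2
      exact (ENNReal.add_le_add_iff_right ENNReal.ofReal_ne_top).1 h2
    obtain ⟨W, hWY, hWc, hW⟩ := aux_count hδ x e he (T \ Metric.ball t (lam / 4)) Y
      (fun s hs => hY s hs.1) hT'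
    have hone : ∀ y' ∈ W, (1 : ENNReal) ≤ ∑ k ∈ Finset.Icc (-M) M,
      (Metric.closedBall (y + ((k : ℝ) * δ) • (y' - y)) ((2 / (lam / 4) + D) * δ)).indicator
        (fun _ => (1 : ENNReal)) x := by
      intro y' hy'
      obtain ⟨t', ht', hty'⟩ := hW y' hy'
      have htt : lam / 4 ≤ |t' - t| := by
        have := ht'.2
        rw [Metric.mem_ball, not_lt, Real.dist_eq] at this
        exact this
      obtain ⟨k, hk, hx⟩ := aux_geom hδ (by positivity) M hM x e y y' t t' (hT1 t ht)
        (hT1 t' ht'.1) htt hty hty' (hD y (hZY hy) y' (hWY hy'))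
      refine le_trans ?_ (Finset.single_le_sum (fun _ _ => zero_le) hk)
      rw [Set.indicator_of_mem hx]
    calc ENNReal.ofReal (lam / (8 * δ)) ≤ ENNReal.ofReal (W.card : ℝ) := by
          apply ENNReal.ofReal_le_ofReal
          refine le_trans (le_of_eq ?_) hWc
          field_simp; norm_num
      _ = ∑ y' ∈ W, 1 := by simp
      _ ≤ _ := Finset.sum_le_sum hone
      _ ≤ _ := Finset.sum_le_sum_of_subset hWY
  calc ENNReal.ofReal (lam ^ 2 / (32 * δ ^ 2))
      = ENNReal.ofReal (lam / (4 * δ)) * ENNReal.ofReal (lam / (8 * δ)) := by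
        rw [← ENNReal.ofReal_mul (by positivity)]; congr 1; field_simp; norm_num
    _ ≤ ENNReal.ofReal (Z.card : ℝ) * ENNReal.ofReal (lam / (8 * δ)) := by gcongr
    _ = ∑ y ∈ Z, ENNReal.ofReal (lam / (8 * δ)) := by simp
    _ ≤ _ := Finset.sum_le_sum hin
    _ ≤ _ := Finset.sum_le_sum_of_subset hZY

lemma aux_core {n : ℕ} {δ lam D m : ℝ} (hδ : 0 < δ) (hδ1 : δ ≤ 1) (hl : 0 < lam) (hD0 : 0 ≤ D)
    (hm : 0 ≤ m)
    (P : Set (EuclideanSpace ℝ (Fin n)))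
    (hD : ∀ y ∈ P, ∀ y' ∈ P, dist y y' ≤ D)
    (Y : Finset (EuclideanSpace ℝ (Fin n))) (hYP : ∀ y ∈ Y, y ∈ P)
    (hY : ∀ p ∈ P, ∃ y ∈ Y, dist p y ≤ δ)
    (A : Set (EuclideanSpace ℝ (Fin n))) (hA : ENNReal.ofReal m ≤ volume A)
    (hAP : ∀ x ∈ A, ∃ e : EuclideanSpace ℝ (Fin n), ‖e‖ = 1 ∧ ∃ T : Set ℝ,
      (∀ t ∈ T, |t| ≤ 1) ∧ ENNReal.ofReal lam ≤ volume T ∧ ∀ t ∈ T, x + t • e ∈ P) :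
    lam ^ 2 / (32 * δ ^ 2) * m ≤ (Y.card : ℝ) ^ 2 * ((8 / lam + 3) / δ *
      (((2 / (lam / 4) + D) * δ) ^ n *
        (volume (Metric.ball (0 : EuclideanSpace ℝ (Fin n)) 1)).toReal)) := by
  set ω := volume (Metric.ball (0 : EuclideanSpace ℝ (Fin n)) 1) with hω
  have hωt : ω ≠ ⊤ := measure_ball_lt_top.ne
  set M : ℤ := ⌈1 / (lam / 4 * δ)⌉ with hMdef
  have hM : 1 / (lam / 4 * δ) ≤ M := Int.le_ceil _
  have hM2 : (M : ℝ) < 1 / (lam / 4 * δ) + 1 := Int.ceil_lt_add_one _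
  have hM0 : (0 : ℝ) ≤ M := le_trans (by positivity) hM
  have hM0' : (0 : ℤ) ≤ M := by exact_mod_cast hM0
  set R : ℝ := (2 / (lam / 4) + D) * δ with hR
  have hR0 : 0 ≤ R := by positivity
  let F : EuclideanSpace ℝ (Fin n) → ENNReal := fun x =>
    ∑ y ∈ Y, ∑ y' ∈ Y, ∑ k ∈ Finset.Icc (-M) M,
      (Metric.closedBall (y + ((k : ℝ) * δ) • (y' - y)) R).indicator (fun _ => (1 : ENNReal)) x
  have hmeas : ∀ (y y' : EuclideanSpace ℝ (Fin n)) (k : ℤ), Measurable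
      ((Metric.closedBall (y + ((k : ℝ) * δ) • (y' - y)) R).indicator
        (fun _ => (1 : ENNReal))) := fun y y' k =>
    measurable_const.indicator Metric.isClosed_closedBall.measurableSet
  have hF : Measurable F :=
    Finset.measurable_fun_sum _ fun y _ => Finset.measurable_fun_sum _ fun y' _ =>
      Finset.measurable_fun_sum _ fun k _ => hmeas y y' k
  have hint : ∫⁻ x, F x = (Y.card : ENNReal) * (Y.card * ((Finset.Icc (-M) M).card *
      (ENNReal.ofReal (R ^ n) * ω))) := by
    have h1 : ∀ (y y' : EuclideanSpace ℝ (Fin n)) (k : ℤ), ∫⁻ x,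
      ((Metric.closedBall (y + ((k : ℝ) * δ) • (y' - y)) R).indicator
        (fun _ => (1 : ENNReal))) x = ENNReal.ofReal (R ^ n) * ω := by
      intro y y' k
      rw [lintegral_indicator Metric.isClosed_closedBall.measurableSet, setLIntegral_const, one_mul,
        Measure.addHaar_closedBall volume _ hR0]
      simp [hω]
    simp only [F]
    rw [lintegral_finsetSum _ (fun y _ => Finset.measurable_fun_sum _ fun y' _ =>
      Finset.measurable_fun_sum _ fun k _ => hmeas y y' k)]
    rw [← nsmul_eq_mul, ← Finset.sum_const]
    refine Finset.sum_congr rfl fun y _ => ?_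
    rw [lintegral_finsetSum _ (fun y' _ =>
      Finset.measurable_fun_sum _ fun k _ => hmeas y y' k)]
    rw [← nsmul_eq_mul, ← Finset.sum_const]
    refine Finset.sum_congr rfl fun y' _ => ?_
    rw [lintegral_finsetSum _ (fun k _ => hmeas y y' k)]
    rw [← nsmul_eq_mul, ← Finset.sum_const]
    exact Finset.sum_congr rfl fun k _ => h1 y y' k
  have hsub : A ⊆ {x | ENNReal.ofReal (lam ^ 2 / (32 * δ ^ 2)) ≤ F x} := by
    intro x hx
    obtain ⟨e, he, T, hT1, hT, hTP⟩ := hAP x hx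
    exact aux_pairs hδ hl M hM x e he T hT1 Y
      (fun y hy y' hy' => hD y (hYP y hy) y' (hYP y' hy')) (fun t ht => hY _ (hTP t ht)) hT
  have hmain : ENNReal.ofReal (lam ^ 2 / (32 * δ ^ 2)) * ENNReal.ofReal m ≤
      (Y.card : ENNReal) * (Y.card * ((Finset.Icc (-M) M).card *
      (ENNReal.ofReal (R ^ n) * ω))) := by
    rw [← hint]
    refine le_trans ?_ (mul_meas_ge_le_lintegral hF (ENNReal.ofReal (lam ^ 2 / (32 * δ ^ 2))))
    gcongr
    exact hA.trans (measure_mono hsub)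
  have hreal := ENNReal.toReal_mono (by finiteness) hmain
  simp only [ENNReal.toReal_mul, ENNReal.toReal_natCast] at hreal
  rw [ENNReal.toReal_ofReal (by positivity), ENNReal.toReal_ofReal hm,
    ENNReal.toReal_ofReal (by positivity)] at hreal
  have hcard : ((Finset.Icc (-M) M).card : ℝ) ≤ (8 / lam + 3) / δ := by
    have h0 : ((Finset.Icc (-M) M).card : ℤ) = 2 * M + 1 := by
      rw [Int.card_Icc, Int.toNat_of_nonneg (by omega)]; ring
    have h0' : ((Finset.Icc (-M) M).card : ℝ) = 2 * M + 1 := by exact_mod_cast h0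
    rw [h0', le_div_iff₀ hδ]
    have h4 : 1 / (lam / 4 * δ) * δ = 4 / lam := by field_simp
    have h5 : (M : ℝ) * δ ≤ 4 / lam + δ := by nlinarith
    have h6 : 8 / lam = 2 * (4 / lam) := by ring
    rw [h6]
    nlinarith
  refine hreal.trans ?_
  rw [sq, mul_assoc]
  gcongr

lemma aux_alg {j : ℕ} {δ lam m w C₁ C₂ c V : ℝ} (hδ : 0 < δ) (hw : 0 < w)
    (hC₁ : 0 < C₁) (hC₂ : 0 < C₂) (hc : 0 ≤ c)
    (h1 : lam ^ 2 / (32 * δ ^ 2) * m ≤ c ^ 2 * (C₁ / δ * ((C₂ * δ) ^ (j + 1) * w)))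
    (h2 : c * ((δ / 2) ^ (j + 1) * w) ≤ V) :
    lam ^ 2 * m * (1 / 4) ^ (j + 1) * w / (32 * C₁ * C₂ ^ (j + 1)) * δ ^ j ≤ V ^ 2 := by
  have h3 : (c * ((δ / 2) ^ (j + 1) * w)) ^ 2 ≤ V ^ 2 := pow_le_pow_left₀ (by positivity) h2 2
  refine le_trans ?_ h3
  have h4 : lam ^ 2 * m * (1 / 4) ^ (j + 1) * w / (32 * C₁ * C₂ ^ (j + 1)) * δ ^ j =
      (lam ^ 2 / (32 * δ ^ 2) * m) * ((1 / 4) ^ (j + 1) * w * δ ^ (j + 2) / (C₁ * C₂ ^ (j + 1))) := by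
    field_simp
    ring
  have h5 : (c * ((δ / 2) ^ (j + 1) * w)) ^ 2 =
      (c ^ 2 * (C₁ / δ * ((C₂ * δ) ^ (j + 1) * w))) *
        ((1 / 4) ^ (j + 1) * w * δ ^ (j + 2) / (C₁ * C₂ ^ (j + 1))) := by
    have h6 : ((1 : ℝ) / 4) ^ (j + 1) = ((1 / 2) ^ (j + 1)) ^ 2 := by
      rw [← pow_mul, mul_comm, pow_mul]; norm_num
    rw [h6, div_eq_mul_one_div δ 2, mul_pow, mul_pow]
    field_simp
    ring
  rw [h4, h5]
  gcongr

/-- every Nikodym-type set has lower Minkowski dimension at least `(n+1)/2`: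
if the set `Π*` of points lying on some unit segment meeting the bounded set `Π` in a set
of positive length has positive (outer) measure, then for every `ε > 0` the volume of the
`δ`-neighborhood of `Π` is at least `c_ε δ^{(n-1)/2+ε}` for all `δ ∈ (0,1]`. -/
theorem stmt_12 (n : ℕ) (hn : 2 ≤ n) (P : Set (EuclideanSpace ℝ (Fin n)))
    (hbdd : Bornology.IsBounded P)
    (hpos : 0 < volume {x : EuclideanSpace ℝ (Fin n) |
      ∃ e : EuclideanSpace ℝ (Fin n), ‖e‖ = 1 ∧
        ∃ c ∈ Set.Icc (0:ℝ) 1,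
          0 < volume {s ∈ Set.Icc (0:ℝ) 1 | x + (s - c) • e ∈ P}}) :
    ∀ ε : ℝ, 0 < ε → ∃ cε : ℝ, 0 < cε ∧
      ∀ δ ∈ Set.Ioc (0:ℝ) 1,
        ENNReal.ofReal (cε * δ ^ (((n : ℝ) - 1)/2 + ε)) ≤
          volume (Metric.thickening δ P) := by
  intro ε hε
  set Q : ℕ → Set (EuclideanSpace ℝ (Fin n)) := fun k => {x |
      ∃ e : EuclideanSpace ℝ (Fin n), ‖e‖ = 1 ∧
        ∃ c ∈ Set.Icc (0:ℝ) 1, ENNReal.ofReal (1 / ((k : ℝ) + 1)) ≤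
          volume {s ∈ Set.Icc (0:ℝ) 1 | x + (s - c) • e ∈ P}} with hQ
  obtain ⟨k, hk⟩ : ∃ k, 0 < volume (Q k) := by
    by_contra hcon
    have hcon' : ∀ k, volume (Q k) = 0 := by
      intro k
      by_contra h
      exact hcon ⟨k, pos_iff_ne_zero.2 h⟩
    have h0 : volume (⋃ k, Q k) = 0 := measure_iUnion_null hcon'
    refine hpos.ne' (measure_mono_null ?_ h0)
    rintro x ⟨e, he, c, hc, hv⟩
    obtain ⟨r, hr0, hr⟩ : ∃ r : ℝ, 0 < r ∧
        ENNReal.ofReal r ≤ volume {s ∈ Set.Icc (0:ℝ) 1 | x + (s - c) • e ∈ P} := by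
      obtain ⟨r, hr0, hr⟩ := ENNReal.lt_iff_exists_nnreal_btwn.1 hv
      exact ⟨r, by exact_mod_cast hr0, by rw [ENNReal.ofReal_coe_nnreal]; exact hr.le⟩
    obtain ⟨k, hk⟩ := exists_nat_one_div_lt hr0
    rw [Set.mem_iUnion]
    exact ⟨k, e, he, c, hc, (ENNReal.ofReal_le_ofReal hk.le).trans hr⟩
  obtain ⟨m, hm0, hm⟩ : ∃ m : ℝ, 0 < m ∧ ENNReal.ofReal m ≤ volume (Q k) := by
    obtain ⟨r, hr0, hr⟩ := ENNReal.lt_iff_exists_nnreal_btwn.1 hk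
    exact ⟨r, by exact_mod_cast hr0, by rw [ENNReal.ofReal_coe_nnreal]; exact hr.le⟩
  set lam : ℝ := 1 / ((k : ℝ) + 1) with hlam
  have hl : 0 < lam := by positivity
  have hQP : ∀ x ∈ Q k, ∃ e : EuclideanSpace ℝ (Fin n), ‖e‖ = 1 ∧ ∃ T : Set ℝ,
      (∀ t ∈ T, |t| ≤ 1) ∧ ENNReal.ofReal lam ≤ volume T ∧ ∀ t ∈ T, x + t • e ∈ P := by
    rintro x ⟨e, he, c, hc, hv⟩
    refine ⟨e, he, (fun t => t + c) ⁻¹' {s ∈ Set.Icc (0:ℝ) 1 | x + (s - c) • e ∈ P}, ?_, ?_, ?_⟩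
    · rintro t ⟨ht, -⟩
      rw [Set.mem_Icc] at ht hc
      rw [abs_le]; constructor <;> linarith [ht.1, ht.2, hc.1, hc.2]
    · rw [measure_preimage_add_right]
      exact hv
    · rintro t ⟨-, ht⟩
      simpa using ht
  obtain ⟨D, hD⟩ := Metric.isBounded_iff.1 hbdd
  obtain ⟨j, rfl⟩ : ∃ j, n = j + 1 := ⟨n - 1, by omega⟩
  set ω := volume (Metric.ball (0 : EuclideanSpace ℝ (Fin (j + 1))) 1) with hω
  have hωt : ω ≠ ⊤ := measure_ball_lt_top.ne
  have hw : 0 < ω.toReal := ENNReal.toReal_pos (Metric.measure_ball_pos _ _ one_pos).ne' hωt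
  set C₁ : ℝ := 8 / lam + 3 with hC₁
  set C₂ : ℝ := 2 / (lam / 4) + max D 0 with hC₂
  have hC₁0 : 0 < C₁ := by positivity
  have hC₂0 : 0 < C₂ := by positivity
  set K : ℝ := lam ^ 2 * m * (1 / 4) ^ (j + 1) * ω.toReal / (32 * C₁ * C₂ ^ (j + 1)) with hK
  have hK0 : 0 < K := by positivity
  refine ⟨Real.sqrt K, Real.sqrt_pos.2 hK0, ?_⟩
  rintro δ ⟨hδ, hδ1⟩
  obtain ⟨Y, hYP, hsep, hYc⟩ := aux_sep hδ P hbdd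
  have hvol := aux_vol hδ P Y hYP hsep
  have hcore := aux_core hδ hδ1 hl (le_max_right D 0) hm0.le P
    (fun y hy y' hy' => (hD hy hy').trans (le_max_left D 0)) Y hYP hYc (Q k) hm hQP
  have hVt : volume (Metric.thickening δ P) ≠ ⊤ := hbdd.thickening.measure_lt_top.ne
  have hvol' := ENNReal.toReal_mono hVt hvol
  simp only [ENNReal.toReal_mul, ENNReal.toReal_natCast] at hvol'
  rw [ENNReal.toReal_ofReal (by positivity)] at hvol'
  have hfin := aux_alg hδ hw hC₁0 hC₂0 (Nat.cast_nonneg _) hcore hvol'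
  rw [ENNReal.ofReal_le_iff_le_toReal hVt]
  rw [← pow_le_pow_iff_left₀ (by positivity) ENNReal.toReal_nonneg two_ne_zero]
  refine le_trans ?_ hfin
  rw [mul_pow, Real.sq_sqrt hK0.le]
  refine mul_le_mul_of_nonneg_left ?_ hK0.le
  rw [← Real.rpow_natCast (δ ^ _), ← Real.rpow_mul hδ.le, ← Real.rpow_natCast δ j]
  apply Real.rpow_le_rpow_of_exponent_ge hδ hδ1
  push_cast
  linarith
end
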